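/- arXiv:math/0301142 — 4 statements merged into one kernel-verified Lean document; each statement's English description precedes it below -/
import Mathlib

section
/- Let C be a ℂ-linear additive category in which all Hom-spaces are finite-dimensional ℂ-vector spaces and every endomorphism ring is a semisimple ℂ-algebra. Then for every morphism f : X ⟶ Y there exists a morphism g : Y ⟶ X such that f∘g∘f = f (so that f∘g ∈ End(Y) and g∘f ∈ End(X) are idempotents). Moreover, if f is a monomorphism then g∘f = id_X, and if f is an epimorphism then f∘g = id_Y. -/
open CategoryTheory

/-!
A semisimple ring is von Neumann regular: the left ideal generated by `a` is generated by an
idempotent `e = s * a`, and right multiplication by `e` fixes `a`. The morphism `f : X ⟶ Y` extends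
by zero to the endomorphism `biprod.fst ≫ f ≫ biprod.inr` of `X ⊞ Y`, which therefore has a
quasi-inverse; since `biprod.fst` is epic and `biprod.inr` is monic, it restricts to a quasi-inverse
of `f`.
-/

theorem exists_mul_mul_self_eq_self {R : Type*} [Ring R] [IsSemisimpleRing R] (a : R) :
    ∃ s : R, a * s * a = a := by
  obtain ⟨e, he, hspan⟩ := IsSemisimpleRing.ideal_eq_span_idempotent (Ideal.span {a})
  obtain ⟨s, hs⟩ : ∃ s, s * a = e :=
    Ideal.mem_span_singleton'.1 (hspan ▸ Ideal.mem_span_singleton_self e)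
  obtain ⟨r, hr⟩ : ∃ r, r * e = a :=
    Ideal.mem_span_singleton'.1 (hspan ▸ Ideal.mem_span_singleton_self a)
  refine ⟨s, ?_⟩
  calc a * s * a = r * e * e := by rw [mul_assoc, hs, hr]
    _ = a := by rw [mul_assoc, he.eq, hr]

section Category

variable {C : Type*} [Category C] {W X Y Z : C}

/-- `g` is a quasi-inverse (or inner inverse) of `f` if `f ∘ g ∘ f = f`. The relation is not
symmetric: `g ∘ f ∘ g = g` is not required. -/
def IsQuasiInverse (f : X ⟶ Y) (g : Y ⟶ X) : Prop :=
  f ≫ g ≫ f = f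

namespace IsQuasiInverse

variable {f : X ⟶ Y} {g : Y ⟶ X}

theorem comp_inverse_idempotent (h : IsQuasiInverse f g) : (f ≫ g) ≫ f ≫ g = f ≫ g := by
  simpa only [Category.assoc] using h =≫ g

theorem inverse_comp_idempotent (h : IsQuasiInverse f g) : (g ≫ f) ≫ g ≫ f = g ≫ f := by
  simpa only [Category.assoc] using g ≫= h

theorem comp_inverse_eq_id_of_mono [Mono f] (h : IsQuasiInverse f g) : f ≫ g = 𝟙 X := by
  rw [← cancel_mono f, Category.assoc, h, Category.id_comp]

theorem inverse_comp_eq_id_of_epi [Epi f] (h : IsQuasiInverse f g) : g ≫ f = 𝟙 Y := by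
  rw [← cancel_epi f, h, Category.comp_id]

theorem of_epi_comp_mono {p : W ⟶ X} {i : Y ⟶ Z} [Epi p] [Mono i] {s : Z ⟶ W}
    (h : IsQuasiInverse (p ≫ f ≫ i) s) : IsQuasiInverse f (i ≫ s ≫ p) := by
  rw [IsQuasiInverse, ← cancel_epi p, ← cancel_mono i]
  simpa only [IsQuasiInverse, Category.assoc] using h

end IsQuasiInverse

end Category

section Preadditive

variable {C : Type*} [Category C] [Preadditive C] {X Y : C}

theorem exists_isQuasiInverse_end {W : C} [IsSemisimpleRing (End W)] (a : W ⟶ W) :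
    ∃ s : W ⟶ W, IsQuasiInverse a s := by
  obtain ⟨s, hs⟩ := exists_mul_mul_self_eq_self (End.of a)
  exact ⟨s, hs⟩

theorem exists_isQuasiInverse_of_epi_of_mono {W : C} [IsSemisimpleRing (End W)]
    (p : W ⟶ X) [Epi p] (i : Y ⟶ W) [Mono i] (f : X ⟶ Y) :
    ∃ g : Y ⟶ X, IsQuasiInverse f g := by
  obtain ⟨s, hs⟩ := exists_isQuasiInverse_end (p ≫ f ≫ i)
  exact ⟨i ≫ s ≫ p, hs.of_epi_comp_mono⟩

theorem stmt_0_general [Limits.HasBinaryBiproduct X Y] [IsSemisimpleRing (End (X ⊞ Y))]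
    (f : X ⟶ Y) :
    ∃ g : Y ⟶ X, f ≫ g ≫ f = f ∧
      (g ≫ f) ≫ (g ≫ f) = g ≫ f ∧ (f ≫ g) ≫ (f ≫ g) = f ≫ g ∧
      (Mono f → f ≫ g = 𝟙 X) ∧ (Epi f → g ≫ f = 𝟙 Y) := by
  obtain ⟨g, hg⟩ :=
    exists_isQuasiInverse_of_epi_of_mono (Limits.biprod.fst : X ⊞ Y ⟶ X) Limits.biprod.inr f
  exact ⟨g, hg, hg.inverse_comp_idempotent, hg.comp_inverse_idempotent,
    fun _ ↦ hg.comp_inverse_eq_id_of_mono, fun _ ↦ hg.inverse_comp_eq_id_of_epi⟩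

end Preadditive

/-- In a semisimple ℂ-category (ℂ-linear additive, finite-dimensional
Hom-spaces, semisimple endomorphism rings), every morphism `f : X ⟶ Y` admits a
quasi-inverse `g : Y ⟶ X` with `f ∘ g ∘ f = f`; consequently `f ∘ g` and `g ∘ f` are
idempotents, and if `f` is monic then `g ∘ f = id`, while if `f` is epic then
`f ∘ g = id`. -/
theorem stmt_0 {C : Type*} [Category C] [Preadditive C] [Limits.HasFiniteBiproducts C]
    [Linear ℂ C]
    (hfd : ∀ X Y : C, FiniteDimensional ℂ (X ⟶ Y))
    (hss : ∀ X : C, IsSemisimpleRing (End X))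
    {X Y : C} (f : X ⟶ Y) :
    ∃ g : Y ⟶ X, f ≫ g ≫ f = f ∧
      (g ≫ f) ≫ (g ≫ f) = g ≫ f ∧ (f ≫ g) ≫ (f ≫ g) = f ≫ g ∧
      (Mono f → f ≫ g = 𝟙 X) ∧ (Epi f → g ≫ f = 𝟙 Y) := by
  have := Limits.hasBinaryBiproducts_of_finite_biproducts C
  have := hss (X ⊞ Y)
  exact stmt_0_general f
end

section
/- Let C be a ℂ-linear monoidal category with finite biproducts in which all Hom-spaces are finite-dimensional and every endomorphism ring is a semisimple ℂ-algebra, let X be an object and N ≥ 1 an integer, and assume 𝟙 and X are simple, Hom(X^⊗m, X^⊗n) = 0 unless m ≡ n (mod N), and Hom(𝟙, X^⊗N) and Hom(X^⊗N, 𝟙) are one-dimensional. Then: (i) there exist morphisms ι : 𝟙 ⟶ X^⊗N and π : X^⊗N ⟶ 𝟙 with π∘ι = id_𝟙; and (ii) for any two such pairs, i.e. whenever π∘ι = id_𝟙 = π'∘ι', one has ι∘π = ι'∘π', so that Π := ι∘π is a canonical idempotent in End(X^⊗N) independent of the choice of ι and π. -/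
open CategoryTheory CategoryTheory.MonoidalCategory

/-- The `n`-th tensor power of an object `X`, with `X^⊗0 = 𝟙` and `X^⊗1 = X`. -/
def tp {C : Type*} [Category C] [MonoidalCategory C] (X : C) : ℕ → C
  | 0 => 𝟙_ C
  | 1 => X
  | (n + 2) => tp X (n + 1) ⊗ X

/-!
Write `A = 𝟙_ C` and `B = tp X N`. As `End (A ⊞ B)` is semisimple, hence von Neumann regular, the
matrix entry `ι : A ⟶ B` has a quasi-inverse `g` with `ι ≫ g ≫ ι = ι`. If `ι ≠ 0`, then `ι ≫ g` is a
nonzero idempotent of the one-dimensional algebra `End A`, so it is the identity. For uniqueness,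
`π ≫ ι = π ≫ (ι' ≫ π') ≫ ι`; all maps `A ⟶ B` are multiples of a single one, and so are all maps
`B ⟶ A`, hence primed and unprimed factors may be exchanged and this equals
`π' ≫ (ι ≫ π) ≫ ι' = π' ≫ ι'`.
-/

theorem exists_mul_mul_eq_self_of_isSemisimpleRing {R : Type*} [Ring R] [IsSemisimpleRing R]
    (x : R) : ∃ y : R, x * y * x = x := by
  obtain ⟨e, he, hspan⟩ := IsSemisimpleRing.ideal_eq_span_idempotent (Ideal.span {x})
  obtain ⟨y, hy⟩ : ∃ y, y * x = e :=
    Ideal.mem_span_singleton'.1 (hspan ▸ Ideal.mem_span_singleton_self e)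
  obtain ⟨z, hz⟩ : ∃ z, z * e = x :=
    Ideal.mem_span_singleton'.1 (hspan ▸ Ideal.mem_span_singleton_self x)
  refine ⟨y, ?_⟩
  calc x * y * x = z * (e * e) := by rw [mul_assoc, hy, ← mul_assoc, hz]
    _ = x := by rw [he.eq, hz]

theorem isDomain_of_finrank_eq_one {R S : Type*} [CommRing R] [IsDomain R] [Ring S] [Algebra R S]
    [Module.Free R S] (h : Module.finrank R S = 1) : IsDomain S :=
  (RingEquiv.ofBijective (algebraMap R S)
    (Module.Free.bijective_algebraMap_of_finrank_eq_one h)).symm.toMulEquiv.isDomain R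

section Preadditive

open Limits

variable {C : Type*} [Category C] [Preadditive C] {A B : C}

theorem exists_comp_comp_eq_self_of_isSemisimpleRing_end_biprod [HasBinaryBiproduct A B]
    [IsSemisimpleRing (End (A ⊞ B))] (f : A ⟶ B) : ∃ g : B ⟶ A, f ≫ g ≫ f = f := by
  let F : End (A ⊞ B) := biprod.fst ≫ f ≫ biprod.inr
  obtain ⟨G, hG⟩ := exists_mul_mul_eq_self_of_isSemisimpleRing F
  have hFGF : F ≫ G ≫ F = F := hG
  refine ⟨biprod.inr ≫ G ≫ biprod.fst, ?_⟩
  simpa [F] using congrArg (fun t ↦ biprod.inl ≫ t ≫ biprod.snd) hFGF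

theorem isSplitMono_of_ne_zero [HasBinaryBiproduct A B] [IsSemisimpleRing (End (A ⊞ B))]
    [NoZeroDivisors (End A)] {f : A ⟶ B} (hf : f ≠ 0) : IsSplitMono f := by
  obtain ⟨g, hg⟩ := exists_comp_comp_eq_self_of_isSemisimpleRing_end_biprod f
  let e : End A := f ≫ g
  have hef : e ≫ f = f := by rw [Category.assoc, hg]
  have he : IsIdempotentElem e := by
    change e ≫ f ≫ g = f ≫ g
    rw [← Category.assoc, hef]
  have he_ne_zero : e ≠ 0 := by
    intro h
    exact hf (by rw [← hef, h, zero_comp])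
  exact .mk' ⟨g, (IsIdempotentElem.iff_eq_zero_or_one.1 he).resolve_left he_ne_zero⟩

theorem comp_eq_comp_of_isPrincipal_hom {R : Type*} [CommSemiring R] [Linear R C]
    (hAB : (⊤ : Submodule R (A ⟶ B)).IsPrincipal) (hBA : (⊤ : Submodule R (B ⟶ A)).IsPrincipal)
    {ι ι' : A ⟶ B} {π π' : B ⟶ A} (h : ι ≫ π = 𝟙 A) (h' : ι' ≫ π' = 𝟙 A) :
    π ≫ ι = π' ≫ ι' := by
  obtain ⟨ι₀, hι₀⟩ := hAB
  obtain ⟨π₀, hπ₀⟩ := hBA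
  have exists_smul_ι₀ (f : A ⟶ B) : ∃ c : R, c • ι₀ = f :=
    Submodule.mem_span_singleton.1 (hι₀ ▸ Submodule.mem_top)
  have exists_smul_π₀ (f : B ⟶ A) : ∃ c : R, c • π₀ = f :=
    Submodule.mem_span_singleton.1 (hπ₀ ▸ Submodule.mem_top)
  obtain ⟨a, rfl⟩ := exists_smul_ι₀ ι
  obtain ⟨a', rfl⟩ := exists_smul_ι₀ ι'
  obtain ⟨b, rfl⟩ := exists_smul_π₀ π
  obtain ⟨b', rfl⟩ := exists_smul_π₀ π'
  calc (b • π₀) ≫ (a • ι₀) = (b • π₀) ≫ ((a' • ι₀) ≫ (b' • π₀)) ≫ (a • ι₀) := by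
        rw [h', Category.id_comp]
    _ = (b' • π₀) ≫ ((a • ι₀) ≫ (b • π₀)) ≫ (a' • ι₀) := by
        simp only [Linear.comp_smul, Linear.smul_comp, Category.assoc, smul_smul]
        congr 1
        ring
    _ = (b' • π₀) ≫ (a' • ι₀) := by rw [h, Category.id_comp]

theorem stmt_3_general {k : Type*} [Field k] [Linear k C] [HasBinaryBiproduct A B]
    [IsSemisimpleRing (End (A ⊞ B))] (hA : Module.finrank k (End A) = 1)
    (hAB : Module.finrank k (A ⟶ B) = 1) (hBA : Module.finrank k (B ⟶ A) = 1) :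
    (∃ (ι : A ⟶ B) (π : B ⟶ A), ι ≫ π = 𝟙 A) ∧
      ∀ (ι ι' : A ⟶ B) (π π' : B ⟶ A), ι ≫ π = 𝟙 A → ι' ≫ π' = 𝟙 A → π ≫ ι = π' ≫ ι' := by
  have : IsDomain (End A) := isDomain_of_finrank_eq_one hA
  have := Module.finite_of_finrank_eq_succ hAB
  have := Module.finite_of_finrank_eq_succ hBA
  constructor
  · obtain ⟨ι, hι, -⟩ := finrank_eq_one_iff'.1 hAB
    have := isSplitMono_of_ne_zero hι
    exact ⟨ι, retraction ι, IsSplitMono.id ι⟩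
  · intro ι ι' π π'
    exact comp_eq_comp_of_isPrincipal_hom (R := k)
      (Module.finrank_le_one_iff_top_isPrincipal.1 hAB.le)
      (Module.finrank_le_one_iff_top_isPrincipal.1 hBA.le)

end Preadditive

/-- In a ℂ-linear monoidal category with finite biproducts,
finite-dimensional Hom-spaces and semisimple endomorphism rings, if `𝟙` and `X` are
simple, `Hom(X^⊗m, X^⊗n) = 0` unless `m ≡ n (mod N)`, and `Hom(𝟙, X^⊗N)` and
`Hom(X^⊗N, 𝟙)` are one-dimensional, then (i) there exist `ι : 𝟙 ⟶ X^⊗N` and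
`π : X^⊗N ⟶ 𝟙` with `π ∘ ι = id`, and (ii) the idempotent `Π = ι ∘ π` is independent
of the choice of such a pair. -/
theorem stmt_3 {C : Type*} [Category C] [MonoidalCategory C] [Preadditive C]
    [Limits.HasFiniteBiproducts C] [Linear ℂ C] [MonoidalPreadditive C]
    [MonoidalLinear ℂ C]
    (hfd : ∀ A B : C, FiniteDimensional ℂ (A ⟶ B))
    (hss : ∀ A : C, IsSemisimpleRing (End A))
    (X : C) (N : ℕ) (hN : 1 ≤ N)
    (hunit_simple : Module.finrank ℂ (End (𝟙_ C)) = 1)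
    (hX_simple : Module.finrank ℂ (End X) = 1)
    (hvanish : ∀ m n : ℕ, ¬ m ≡ n [MOD N] → ∀ f : tp X m ⟶ tp X n, f = 0)
    (hdim_into : Module.finrank ℂ (𝟙_ C ⟶ tp X N) = 1)
    (hdim_from : Module.finrank ℂ (tp X N ⟶ 𝟙_ C) = 1) :
    (∃ (ι : 𝟙_ C ⟶ tp X N) (π : tp X N ⟶ 𝟙_ C), ι ≫ π = 𝟙 (𝟙_ C)) ∧
      ∀ (ι ι' : 𝟙_ C ⟶ tp X N) (π π' : tp X N ⟶ 𝟙_ C),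
        ι ≫ π = 𝟙 (𝟙_ C) → ι' ≫ π' = 𝟙 (𝟙_ C) → π ≫ ι = π' ≫ ι' := by
  have := Limits.hasBinaryBiproducts_of_finite_biproducts C
  have := hss (𝟙_ C ⊞ tp X N)
  exact stmt_3_general hunit_simple hdim_into hdim_from
end

section
/- Let n ≥ 1 and let q be a nonzero complex number such that q² is not a primitive k-th root of unity for any k with 2 ≤ k ≤ n. Then the Iwahori–Hecke algebra H_n(q²) is isomorphic as a ℂ-algebra to the group algebra ℂ[S_n] of the symmetric group on n letters. -/
/-- The generator `T̃_i` of the Iwahori–Hecke algebra in the free algebra. -/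
def heckeT (n : ℕ) (i : Fin (n - 1)) : FreeAlgebra ℂ (Fin (n - 1)) :=
  FreeAlgebra.ι ℂ i

/-- The defining relations of the Iwahori–Hecke algebra `H_n(q²)`: the braid
relations together with the quadratic relations `T̃_i² = (q − q⁻¹)T̃_i + 1`. -/
inductive HeckeRel (q : ℂ) (n : ℕ) :
    FreeAlgebra ℂ (Fin (n - 1)) → FreeAlgebra ℂ (Fin (n - 1)) → Prop
  | braid (i j : Fin (n - 1)) (h : (i : ℕ) + 1 = (j : ℕ)) :
      HeckeRel q n (heckeT n i * heckeT n j * heckeT n i)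
        (heckeT n j * heckeT n i * heckeT n j)
  | comm (i j : Fin (n - 1)) (h : (i : ℕ) + 2 ≤ (j : ℕ)) :
      HeckeRel q n (heckeT n i * heckeT n j) (heckeT n j * heckeT n i)
  | quad (i : Fin (n - 1)) :
      HeckeRel q n (heckeT n i * heckeT n i) ((q - q⁻¹) • heckeT n i + 1)

/-- The Iwahori–Hecke algebra `H_n(q²)` of type `A_{n-1}`. -/
abbrev HeckeAlgebra (q : ℂ) (n : ℕ) := RingQuot (HeckeRel q n)

/-- The generator `T̃_i` of `H_n(q²)`. -/
noncomputable def HeckeAlgebra.T (q : ℂ) (n : ℕ) (i : Fin (n - 1)) : HeckeAlgebra q n :=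
  RingQuot.mkAlgHom ℂ (HeckeRel q n) (heckeT n i)

/-!
The argument runs in the left regular representation of an algebra generated by elements `T_i`
that satisfy the Hecke relations. The Jucys–Murphy elements `L_0 = 0`, `L_{i+1} = T_i L_i T_i + T_i`
commute, and as long as the `q`-integers `[2], …, [n]` do not vanish they are simultaneously
diagonalizable: their joint eigenvalues are `q`-contents `(q^{2c} - 1) / (q - q⁻¹)`, where `c` runs
over the content vectors of standard Young tableaux. On the weight space of `c`, with `d` the
difference of two consecutive contents, `T_i` is a scalar depending only on `q` and `d` plus an
intertwiner into the weight space of the tableau with `i` and `i + 1` interchanged, whose square is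
again a scalar depending only on `q` and `d`.

Hence replacing the scalars for `q` by those for `q'` and rescaling the intertwiners accordingly
turns a representation of the relations for `q` into one for `q'`. The construction is functorial
and reversible: it commutes with right multiplications, so it yields left multiplications by new
elements of the algebra, and applied backwards inside the subalgebra which these generate it returns
the old ones. Starting from `ℂ[S_n]`, which is the case `q = 1`, one gets generators of `ℂ[S_n]`
satisfying the relations of `H_n(q²)`, that is, a surjection from `H_n(q²)`. It is bijective since
`H_n(q²)` is spanned by `n!` normal words.
-/

/-! ### Content vectors -/

section ContentVectors

/-- `b` can follow the contents `c 0, …, c (k - 1)`: adding a box of content `b` to the Young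
diagram built by these contents gives a Young diagram again. This is the combinatorial form of
Okounkov and Vershik, which avoids tableaux. -/
structure IsNextContent (k : ℕ) (c : ℕ → ℤ) (b : ℤ) : Prop where
  zero : k = 0 → b = 0
  exists_adjacent : 0 < k → ∃ p < k, c p = b + 1 ∨ c p = b - 1
  exists_between : ∀ p < k, c p = b →
    (∃ r, p < r ∧ r < k ∧ c r = b + 1) ∧ ∃ r, p < r ∧ r < k ∧ c r = b - 1

/-- `c 0, …, c (k - 1)` is the sequence of contents of a standard tableau with `k` boxes. Later
entries of `c` are ignored, so that positions can be natural numbers instead of elements of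
`Fin k`. -/
def IsContentVector (k : ℕ) (c : ℕ → ℤ) : Prop :=
  ∀ m < k, IsNextContent m c (c m)

variable {k l : ℕ} {c d : ℕ → ℤ} {a b : ℤ}

theorem IsNextContent.congr (h : IsNextContent k c b) (hcd : ∀ j < k, c j = d j) :
    IsNextContent k d b where
  zero := h.zero
  exists_adjacent hk := by
    obtain ⟨p, hp, hpb⟩ := h.exists_adjacent hk
    exact ⟨p, hp, hcd p hp ▸ hpb⟩
  exists_between p hp hpb := by
    obtain ⟨⟨r, hpr, hr, hrb⟩, s, hps, hs, hsb⟩ := h.exists_between p hp ((hcd p hp).trans hpb)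
    exact ⟨⟨r, hpr, hr, (hcd r hr).symm.trans hrb⟩, s, hps, hs, (hcd s hs).symm.trans hsb⟩

theorem IsContentVector.mono (h : IsContentVector k c) (hl : l ≤ k) : IsContentVector l c :=
  fun m hm => h m (hm.trans_le hl)

theorem isContentVector_congr (hcd : ∀ j < k, c j = d j) :
    IsContentVector k c ↔ IsContentVector k d := by
  refine forall₂_congr fun m hm => ?_
  rw [hcd m hm]
  exact ⟨fun h => h.congr fun j hj => hcd j (hj.trans hm),
    fun h => h.congr fun j hj => (hcd j (hj.trans hm)).symm⟩

theorem isContentVector_succ :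
    IsContentVector (k + 1) c ↔ IsContentVector k c ∧ IsNextContent k c (c k) := by
  simp only [IsContentVector, Nat.lt_succ_iff_lt_or_eq, or_imp, forall_and, forall_eq]

theorem isContentVector_update :
    IsContentVector (k + 1) (Function.update c k b) ↔
      IsContentVector k c ∧ IsNextContent k c b := by
  have hc : ∀ j < k, Function.update c k b j = c j :=
    fun j hj => Function.update_of_ne hj.ne _ _
  rw [isContentVector_succ, isContentVector_congr hc, Function.update_self]
  exact and_congr_right fun _ => ⟨fun h => h.congr hc, fun h => h.congr fun j hj => (hc j hj).symm⟩

theorem IsContentVector.exists_eq_of_mem_uIcc (h : IsContentVector k c) {m : ℕ} (hm : m < k)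
    {j : ℤ} (hj : j ∈ Finset.uIcc 0 (c m)) : ∃ p < k, c p = j := by
  induction m using Nat.strong_induction_on with
  | _ m ih =>
    by_cases hjm : j = c m
    · exact ⟨m, hm, hjm.symm⟩
    rw [Finset.mem_uIcc] at hj
    rcases m.eq_zero_or_pos with hm0 | hm0
    · have := (h m hm).zero hm0
      omega
    obtain ⟨p, hp, hpm⟩ := (h m hm).exists_adjacent hm0
    exact ih p hp (hp.trans hm) (by rw [Finset.mem_uIcc]; omega)

theorem IsNextContent.exists_eq_of_mem_uIcc (hb : IsNextContent k c b) (h : IsContentVector k c)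
    {j : ℤ} (hj : j ∈ Finset.uIcc 0 b) (hjb : j ≠ b) : ∃ p < k, c p = j := by
  rw [Finset.mem_uIcc] at hj
  rcases k.eq_zero_or_pos with hk | hk
  · have := hb.zero hk
    omega
  obtain ⟨p, hp, hpb⟩ := hb.exists_adjacent hk
  exact h.exists_eq_of_mem_uIcc hp (by rw [Finset.mem_uIcc]; omega)

theorem abs_sub_lt_card_of_uIcc_subset {S : Finset ℤ} (hS : ∀ x ∈ S, Finset.uIcc 0 x ⊆ S)
    {x y : ℤ} (hx : x ∈ S) (hy : y ∈ S) : |x - y| < S.card := by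
  have hsub : Finset.uIcc y x ⊆ S := by
    intro j hj
    by_cases hjx : j ∈ Finset.uIcc 0 x
    · exact hS x hx hjx
    · refine hS y hy ?_
      rw [Finset.mem_uIcc] at *
      omega
  have hcard := Finset.card_le_card hsub
  rw [Int.card_uIcc] at hcard
  rw [Int.abs_eq_natAbs]
  omega

theorem IsContentVector.abs_sub_lt (h : IsContentVector k c) {m p : ℕ} (hm : m < k)
    (hp : p < k) : |c m - c p| < k := by
  have hlt := abs_sub_lt_card_of_uIcc_subset (S := (Finset.range k).image c)
    (fun x hx j hj => by
      obtain ⟨r, hr, rfl⟩ := Finset.mem_image.1 hx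
      obtain ⟨s, hs, rfl⟩ := h.exists_eq_of_mem_uIcc (Finset.mem_range.1 hr) hj
      exact Finset.mem_image_of_mem c (Finset.mem_range.2 hs))
    (Finset.mem_image_of_mem c (Finset.mem_range.2 hm))
    (Finset.mem_image_of_mem c (Finset.mem_range.2 hp))
  have hcard := Finset.card_image_le (s := Finset.range k) (f := c)
  rw [Finset.card_range] at hcard
  omega

theorem IsNextContent.abs_sub_le (h : IsContentVector k c) (ha : IsNextContent k c a)
    (hb : IsNextContent k c b) : |a - b| ≤ k + 1 := by
  set S := insert a (insert b ((Finset.range k).image c)) with hS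
  have hmem : ∀ {x : ℤ}, x ∈ S ↔ x = a ∨ x = b ∨ ∃ p < k, c p = x := by
    simp [hS]
  have hlt : |a - b| < S.card := by
    refine abs_sub_lt_card_of_uIcc_subset (fun x hx j hj => ?_)
      (hmem.2 (.inl rfl)) (hmem.2 (.inr (.inl rfl)))
    by_cases hjx : j = x
    · exact hjx ▸ hx
    refine hmem.2 (.inr (.inr ?_))
    rcases hmem.1 hx with rfl | rfl | ⟨p, hp, rfl⟩
    · exact ha.exists_eq_of_mem_uIcc h hj hjx
    · exact hb.exists_eq_of_mem_uIcc h hj hjx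
    · exact h.exists_eq_of_mem_uIcc hp hj
  have hcard : S.card ≤ k + 2 := calc
    S.card ≤ ((Finset.range k).image c).card + 1 + 1 :=
      (Finset.card_insert_le _ _).trans (Nat.succ_le_succ (Finset.card_insert_le _ _))
    _ ≤ k + 2 := by
      simpa only [Finset.card_range, Nat.reduceAdd, add_assoc, add_le_add_iff_right] using
        Finset.card_image_le (s := Finset.range k) (f := c)
  omega

theorem exists_last_occurrence {P : ℕ → Prop} {p : ℕ} (hp : p < k) (hPp : P p) :
    ∃ r, p ≤ r ∧ r < k ∧ P r ∧ ∀ s, r < s → s < k → ¬ P s := by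
  classical
  refine ⟨Nat.findGreatest P (k - 1), Nat.le_findGreatest (by omega) hPp, ?_,
    Nat.findGreatest_spec (m := p) (by omega) hPp,
    fun s hs hk => Nat.findGreatest_is_greatest hs (by omega)⟩
  have := Nat.findGreatest_le (P := P) (k - 1)
  omega

theorem IsNextContent.not_add_one (h : IsContentVector k c) (ha : IsNextContent k c a) :
    ¬ IsNextContent k c (a + 1) := by
  intro hb
  rcases k.eq_zero_or_pos with hk | hk
  · have := ha.zero hk
    have := hb.zero hk
    omega
  have exists_of_eq_add_one : ∀ p < k, c p = a + 1 → ∃ r, p < r ∧ r < k ∧ c r = a := by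
    intro p hp hpa
    obtain ⟨r, hpr, hr, hra⟩ := (hb.exists_between p hp hpa).2
    exact ⟨r, hpr, hr, by omega⟩
  have ne_a : ∀ p < k, c p ≠ a := by
    intro p hp hpa
    obtain ⟨r, -, hr, hra, hlast⟩ := exists_last_occurrence (P := fun j => c j = a) hp hpa
    obtain ⟨s, hrs, hs, hsa⟩ := (ha.exists_between r hr hra).1
    obtain ⟨t, hst, ht, hta⟩ := exists_of_eq_add_one s hs hsa
    exact hlast t (hrs.trans hst) ht hta
  have ne_a_add_one : ∀ p < k, c p ≠ a + 1 := by
    intro p hp hpa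
    obtain ⟨r, -, hr, hra⟩ := exists_of_eq_add_one p hp hpa
    exact ne_a r hr hra
  obtain ⟨p, hp, hpa⟩ := ha.exists_adjacent hk
  obtain ⟨r, hr, hra⟩ := hb.exists_adjacent hk
  have hp_ne := ne_a_add_one p hp
  have hr_ne := ne_a r hr
  obtain ⟨s, hs, hsa⟩ : ∃ s < k, c s = a := by
    rcases le_total 0 a with ha0 | ha0
    · exact h.exists_eq_of_mem_uIcc hr (by rw [Finset.mem_uIcc]; omega)
    · exact h.exists_eq_of_mem_uIcc hp (by rw [Finset.mem_uIcc]; omega)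
  exact ne_a s hs hsa

theorem IsNextContent.succ (hb : IsNextContent k c b) (hk : 0 < k) (hne : b ≠ c k) :
    IsNextContent (k + 1) c b where
  zero h := absurd h k.succ_ne_zero
  exists_adjacent _ := by
    obtain ⟨p, hp, hpb⟩ := hb.exists_adjacent hk
    exact ⟨p, hp.trans k.lt_succ_self, hpb⟩
  exists_between p hp hpb := by
    obtain hpk : p < k := lt_of_le_of_ne (Nat.lt_succ_iff.1 hp) (by rintro rfl; exact hne hpb.symm)
    obtain ⟨⟨r, hpr, hr, hrb⟩, s, hps, hs, hsb⟩ := hb.exists_between p hpk hpb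
    exact ⟨⟨r, hpr, hr.trans k.lt_succ_self, hrb⟩, s, hps, hs.trans k.lt_succ_self, hsb⟩

theorem IsContentVector.exists_of_not_isNextContent {ε : ℤ} (hε : ε = 1 ∨ ε = -1)
    (h : IsContentVector (k + 1) c) (hn : ¬ IsNextContent (k + 1) c (c k + ε)) :
    ∃ p < k, c p = c k + ε ∧
      ∀ r, p < r → r < k → c r ≠ c k ∧ c r ≠ c k + ε ∧ c r ≠ c k + 2 * ε := by
  by_contra! hcon
  refine hn ⟨fun h0 => absurd h0 k.succ_ne_zero, fun _ => ⟨k, k.lt_succ_self, by omega⟩,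
    fun p hp hpε => ?_⟩
  have hpk : p < k := lt_of_le_of_ne (Nat.lt_succ_iff.1 hp) (by rintro rfl; omega)
  obtain ⟨r, hpr, hr, hrε, hlast⟩ := exists_last_occurrence (P := fun j => c j = c k + ε) hpk hpε
  obtain ⟨s, hrs, hs, hsε⟩ := hcon r hr hrε
  have hsk : c s ≠ c k := by
    intro hsk
    obtain ⟨⟨u, hsu, hu, hub⟩, t, hst, ht, htb⟩ := (h k k.lt_succ_self).exists_between s hs hsk
    rcases hε with rfl | rfl
    · exact hlast u (hrs.trans hsu) hu hub
    · exact hlast t (hrs.trans hst) ht htb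
  have hs2 := hsε hsk (hlast s hrs hs)
  rcases hε with rfl | rfl
  · exact ⟨⟨s, by omega, by omega, by omega⟩, k, by omega, by omega, by omega⟩
  · exact ⟨⟨k, by omega, by omega, by omega⟩, s, by omega, by omega, by omega⟩

theorem IsContentVector.comp_perm {σ : Equiv.Perm ℕ} (h : IsContentVector k c) (h0 : σ 0 = 0)
    (hk : ∀ m < k, σ m < k) (hσ : ∀ i j, |c (σ i) - c (σ j)| ≤ 1 → (σ i < σ j ↔ i < j)) :
    IsContentVector k (c ∘ σ) := by
  intro m hm
  have hm' := h (σ m) (hk m hm)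
  refine ⟨by rintro rfl; exact hm'.zero h0, fun hpos => ?_, fun p hp hpm => ?_⟩
  · obtain ⟨r, hr, hrm⟩ := hm'.exists_adjacent
      (Nat.pos_of_ne_zero fun h => hpos.ne' (σ.injective (h.trans h0.symm)))
    obtain ⟨r, rfl⟩ := σ.surjective r
    exact ⟨r, (hσ r m (by rw [abs_le]; omega)).1 hr, hrm⟩
  · simp only [Function.comp_apply] at hpm
    obtain ⟨⟨r, hpr, hr, hrm⟩, s, hps, hs, hsm⟩ :=
      hm'.exists_between (σ p) ((hσ p m (by simp [hpm])).2 hp) hpm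
    obtain ⟨r, rfl⟩ := σ.surjective r
    obtain ⟨s, rfl⟩ := σ.surjective s
    exact ⟨⟨r, (hσ p r (by rw [abs_le]; omega)).1 hpr, (hσ r m (by rw [abs_le]; omega)).1 hr, hrm⟩,
      s, (hσ p s (by rw [abs_le]; omega)).1 hps, (hσ s m (by rw [abs_le]; omega)).1 hs, hsm⟩

/-- Exchange of the entries at positions `i` and `i + 1`. -/
def swapAdjacent (i : ℕ) (c : ℕ → ℤ) : ℕ → ℤ := c ∘ Equiv.swap i (i + 1)

@[simp]
theorem swapAdjacent_left (i : ℕ) (c : ℕ → ℤ) : swapAdjacent i c i = c (i + 1) := by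
  simp [swapAdjacent]

@[simp]
theorem swapAdjacent_right (i : ℕ) (c : ℕ → ℤ) : swapAdjacent i c (i + 1) = c i := by
  simp [swapAdjacent]

theorem swapAdjacent_of_ne {i j : ℕ} (c : ℕ → ℤ) (hi : j ≠ i) (hi' : j ≠ i + 1) :
    swapAdjacent i c j = c j := by
  simp [swapAdjacent, Equiv.swap_apply_of_ne_of_ne hi hi']

theorem IsContentVector.swapAdjacent {p : ℕ} (h : IsContentVector k c) (hp : p + 1 < k)
    (hd : 2 ≤ |c (p + 1) - c p|) : IsContentVector k (swapAdjacent p c) := by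
  have hp0 : 0 < p := by
    by_contra! h0
    obtain rfl : p = 0 := by omega
    have h0 := (h 0 (by omega)).zero rfl
    obtain ⟨r, hr, hrc⟩ := (h (0 + 1) hp).exists_adjacent (by omega)
    obtain rfl : r = 0 := by omega
    have : |c (0 + 1) - c 0| ≤ 1 := by rw [abs_le]; omega
    omega
  refine h.comp_perm (Equiv.swap_apply_of_ne_of_ne hp0.ne (by omega)) (fun m hm => ?_)
    fun i j hij => ?_
  · rw [Equiv.swap_apply_def]
    split_ifs <;> omega
  · have not_exchanged : ¬ (i = p ∧ j = p + 1) ∧ ¬ (i = p + 1 ∧ j = p) := by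
      constructor <;> rintro ⟨rfl, rfl⟩ <;>
        simp only [Equiv.swap_apply_left, Equiv.swap_apply_right, abs_sub_comm] at hij hd <;> omega
    clear hij
    simp only [Equiv.swap_apply_def]
    split_ifs <;> omega

end ContentVectors

/-! ### Content values and Jucys–Murphy elements -/

section ContentValues

variable {K : Type*} [Field K] {q : K}

/-- The eigenvalue `(q ^ (2c) - 1) / (q - q⁻¹)` of a Jucys–Murphy element that belongs to a box of
content `c`; for `q = ±1`, where this is `0 / 0`, its limit `q * c`. -/
noncomputable def contentValue (q : K) (c : ℤ) : K :=
  open Classical in if q ^ 2 = 1 then q * c else (q ^ (2 * c) - 1) / (q - q⁻¹)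

theorem sub_inv_ne_zero (hq : q ≠ 0) (h : q ^ 2 ≠ 1) : q - q⁻¹ ≠ 0 := by
  intro h0
  rw [sub_eq_zero] at h0
  rw [sq] at h
  nth_rw 2 [h0] at h
  exact h (mul_inv_cancel₀ hq)

theorem sub_inv_eq_zero (h : q ^ 2 = 1) : q - q⁻¹ = 0 := by
  rw [sub_eq_zero]
  exact eq_inv_of_mul_eq_one_left (by rw [← sq, h])

theorem zpow_two_mul (q : K) (c : ℤ) : q ^ (2 * c) = (q ^ 2) ^ c := by
  rw [zpow_mul, zpow_ofNat]

theorem one_add_mul_contentValue (hq : q ≠ 0) (c : ℤ) :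
    1 + (q - q⁻¹) * contentValue q c = q ^ (2 * c) := by
  unfold contentValue
  split_ifs with h
  · rw [sub_inv_eq_zero h, zpow_two_mul, h, one_zpow, zero_mul, add_zero]
  · rw [mul_div_cancel₀ _ (sub_inv_ne_zero hq h), add_sub_cancel]

theorem contentValue_sub (hq : q ≠ 0) (c d : ℤ) :
    contentValue q c - contentValue q d = q ^ (2 * d) * contentValue q (c - d) := by
  unfold contentValue
  split_ifs with h
  · rw [zpow_two_mul q d, h, one_zpow]
    push_cast
    ring
  · have hc : q ^ (2 * c) = q ^ (2 * d) * q ^ (2 * (c - d)) := by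
      rw [← zpow_add₀ hq]
      ring_nf
    rw [hc]
    ring

@[simp]
theorem contentValue_zero (q : K) : contentValue q 0 = 0 := by simp [contentValue]

theorem contentValue_one (hq : q ≠ 0) : contentValue q 1 = q := by
  unfold contentValue
  split_ifs with h
  · simp
  · rw [div_eq_iff (sub_inv_ne_zero hq h), mul_sub, mul_inv_cancel₀ hq, mul_one, zpow_ofNat, sq]

theorem contentValue_eq_neg (hq : q ≠ 0) (c : ℤ) :
    contentValue q c = -q ^ (2 * c) * contentValue q (-c) := by
  have h := contentValue_sub hq 0 c
  rw [contentValue_zero, zero_sub, zero_sub] at h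
  linear_combination -h

theorem contentValue_neg_one (hq : q ≠ 0) : contentValue q (-1) = -q⁻¹ := by
  have h := contentValue_eq_neg hq 1
  rw [contentValue_one hq, mul_one, zpow_ofNat] at h
  field_simp at h ⊢
  linear_combination h

theorem contentValue_add_one (hq : q ≠ 0) (a : ℤ) :
    contentValue q (a + 1) = contentValue q a + q ^ (2 * a) * q := by
  have h := contentValue_sub hq (a + 1) a
  rw [add_sub_cancel_left, contentValue_one hq] at h
  linear_combination h

theorem contentValue_sub_one (hq : q ≠ 0) (a : ℤ) :
    contentValue q (a - 1) = contentValue q a - q ^ (2 * a) * q⁻¹ := by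
  have h := contentValue_sub hq (a - 1) a
  rw [sub_sub_cancel_left, contentValue_neg_one hq] at h
  linear_combination h

theorem contentValue_add_add_contentValue_sub (hq : q ≠ 0) (a : ℤ) {ε : ℤ}
    (hε : ε = 1 ∨ ε = -1) : contentValue q (a + ε) + contentValue q (a - ε) =
      (q - q⁻¹) * q ^ (2 * a) + 2 * contentValue q a := by
  rcases hε with rfl | rfl <;>
    simp only [sub_neg_eq_add, ← sub_eq_add_neg, contentValue_add_one hq,
      contentValue_sub_one hq] <;> ring

theorem contentValue_add_mul_contentValue_sub (hq : q ≠ 0) (a : ℤ) {ε : ℤ}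
    (hε : ε = 1 ∨ ε = -1) : contentValue q (a + ε) * contentValue q (a - ε) =
      contentValue q a ^ 2 - q ^ (2 * a) := by
  have hinv : q * q⁻¹ = 1 := mul_inv_cancel₀ hq
  have hpow := one_add_mul_contentValue hq a
  rcases hε with rfl | rfl <;>
    simp only [sub_neg_eq_add, ← sub_eq_add_neg, contentValue_add_one hq,
      contentValue_sub_one hq] <;>
    linear_combination q ^ (2 * a) * hpow - q ^ (2 * a) * q ^ (2 * a) * hinv

/-- The parameter condition that makes `H_n(q²)` semisimple: no `q`-integer `[m]` with
`0 < m ≤ n` vanishes. -/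
structure IsGenericParameter (q : K) (n : ℕ) : Prop where
  ne_zero : q ≠ 0
  contentValue_ne_zero : ∀ m : ℤ, m ≠ 0 → |m| ≤ n → contentValue q m ≠ 0

theorem IsGenericParameter.contentValue_injective {n : ℕ} (h : IsGenericParameter q n) {a b : ℤ}
    (hab : |a - b| ≤ n) (hval : contentValue q a = contentValue q b) : a = b := by
  by_contra hne
  have hsub := contentValue_sub h.ne_zero a b
  rw [hval, sub_self] at hsub
  exact mul_ne_zero (zpow_ne_zero _ h.ne_zero)
    (h.contentValue_ne_zero _ (sub_ne_zero.2 hne) hab) hsub.symm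

theorem isGenericParameter_of_natCast {n : ℕ} (hq : q ≠ 0)
    (h : ∀ m : ℕ, 0 < m → m ≤ n → contentValue q m ≠ 0) : IsGenericParameter q n := by
  refine ⟨hq, fun m hm hmn h0 => ?_⟩
  rw [Int.abs_eq_natAbs, Nat.cast_le] at hmn
  have hval := h m.natAbs (Int.natAbs_pos.2 hm) hmn
  rcases m.natAbs_eq with hm' | hm'
  · rw [← hm'] at hval
    exact hval h0
  · rw [show (m.natAbs : ℤ) = -m by omega] at hval
    rw [contentValue_eq_neg hq] at h0
    exact mul_ne_zero (neg_ne_zero.2 (zpow_ne_zero _ hq)) hval h0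

theorem isGenericParameter_of_not_isPrimitiveRoot [CharZero K] {n : ℕ} (hq : q ≠ 0)
    (hroot : ∀ k : ℕ, 2 ≤ k → k ≤ n → ¬ IsPrimitiveRoot (q ^ 2) k) : IsGenericParameter q n := by
  refine isGenericParameter_of_natCast hq fun m hm hmn h0 => ?_
  have hpow : (q ^ 2) ^ m = 1 := by
    have h := one_add_mul_contentValue hq m
    rw [h0, mul_zero, add_zero, zpow_two_mul, zpow_natCast] at h
    exact h.symm
  have hpos : 0 < orderOf (q ^ 2) :=
    orderOf_pos_iff.2 (isOfFinOrder_iff_pow_eq_one.2 ⟨m, hm, hpow⟩)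
  have hle : orderOf (q ^ 2) ≤ m := Nat.le_of_dvd hm (orderOf_dvd_of_pow_eq_one hpow)
  by_cases hone : q ^ 2 = 1
  · rw [contentValue, if_pos hone, Int.cast_natCast] at h0
    exact mul_ne_zero hq (Nat.cast_ne_zero.2 hm.ne') h0
  · have hne : orderOf (q ^ 2) ≠ 1 := orderOf_eq_one_iff.not.2 hone
    exact hroot _ (by omega) (hle.trans hmn) (IsPrimitiveRoot.orderOf _)

theorem isGenericParameter_one [CharZero K] (n : ℕ) : IsGenericParameter (1 : K) n :=
  isGenericParameter_of_natCast one_ne_zero fun m hm _ => by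
    simpa [contentValue] using hm.ne'

end ContentValues

section HeckeRelations

variable {K : Type*} [Field K] {A : Type*} [Ring A] [Algebra K A]

/-- The defining relations of `H_n(q²)` for the elements `T 0, …, T (n - 2)` of an algebra. The
remaining entries of `T` are irrelevant; indexing by `ℕ` keeps the indices `i + 1` simple. -/
structure HeckeRelations (q : K) (n : ℕ) (T : ℕ → A) : Prop where
  quad : ∀ i, i + 1 < n → T i * T i = (q - q⁻¹) • T i + 1
  braid : ∀ i, i + 2 < n → T i * T (i + 1) * T i = T (i + 1) * T i * T (i + 1)
  comm : ∀ i j, i + 2 ≤ j → j + 1 < n → Commute (T i) (T j)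

theorem heckeRelations_comp_iff {B : Type*} [Ring B] [Algebra K B] {F : A →ₐ[K] B}
    (hF : Function.Injective F) {q : K} {n : ℕ} {T : ℕ → A} :
    HeckeRelations q n (fun i => F (T i)) ↔ HeckeRelations q n T := by
  constructor <;> rintro ⟨hquad, hbraid, hcomm⟩
  · refine ⟨fun i hi => hF ?_, fun i hi => hF ?_, fun i j hij hj => hF ?_⟩
    · simpa only [map_mul, map_add, map_smul, map_one] using hquad i hi
    · simpa only [map_mul] using hbraid i hi
    · simpa only [map_mul] using (hcomm i j hij hj).eq
  · refine ⟨fun i hi => ?_, fun i hi => ?_, fun i j hij hj => (hcomm i j hij hj).map F⟩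
    · rw [← map_mul, hquad i hi, map_add, map_smul, map_one]
    · simp only [← map_mul, hbraid i hi]

theorem HeckeRelations.congr {q : K} {n : ℕ} {t s : ℕ → A} (H : HeckeRelations q n t)
    (hst : ∀ i, i + 1 < n → t i = s i) : HeckeRelations q n s := by
  refine ⟨fun i hi => ?_, fun i hi => ?_, fun i j hij hj => ?_⟩
  · rw [← hst i hi, H.quad i hi]
  · rw [← hst i (by omega), ← hst (i + 1) hi, H.braid i hi]
  · rw [← hst i (by omega), ← hst j hj]
    exact H.comm i j hij hj

/-- The Jucys–Murphy elements `L_0 = 0`, `L_{i+1} = T_i L_i T_i + T_i`. -/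
def jucysMurphy (T : ℕ → A) : ℕ → A
  | 0 => 0
  | i + 1 => T i * jucysMurphy T i * T i + T i

namespace HeckeRelations

variable {q : K} {n : ℕ} {T : ℕ → A} {i j : ℕ}

theorem commute_jucysMurphy_of_lt (H : HeckeRelations q n T) (hij : i < j) (hj : j + 1 < n) :
    Commute (T j) (jucysMurphy T i) := by
  induction i with
  | zero => exact Commute.zero_right _
  | succ i ih =>
    have hT : Commute (T j) (T i) := (H.comm i j hij hj).symm
    exact ((hT.mul_right (ih (by omega))).mul_right hT).add_right hT

theorem commute_jucysMurphy_add_two (H : HeckeRelations q n T) (hi : i + 2 < n) :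
    Commute (T i) (jucysMurphy T (i + 2)) := by
  have hx := (H.commute_jucysMurphy_of_lt i.lt_succ_self hi).eq
  have hb := H.braid i hi
  have hqa := H.quad i (by omega)
  have hqb := H.quad (i + 1) hi
  simp only [jucysMurphy]
  generalize jucysMurphy T i = x at *
  generalize T (i + 1) = b at *
  generalize T i = a at *
  have hbaxab : a * (b * (a * x * a) * b) = (b * (a * x * a) * b) * a := calc
    a * (b * (a * x * a) * b) = (a * b * a) * x * a * b := by noncomm_ring
    _ = b * a * (b * x) * a * b := by rw [hb]; noncomm_ring
    _ = b * a * x * (b * a * b) := by rw [hx]; noncomm_ring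
    _ = (b * (a * x * a) * b) * a := by rw [← hb]; noncomm_ring
  have hleft : a * (b * a * b) = (q - q⁻¹) • (b * a * b) + b * a := calc
    a * (b * a * b) = (a * b * a) * b := by noncomm_ring
    _ = b * a * (b * b) := by rw [hb]; noncomm_ring
    _ = (q - q⁻¹) • (b * a * b) + b * a := by rw [hqb, mul_add, mul_smul_comm, mul_one]
  have hright : (b * a * b) * a = (q - q⁻¹) • (b * a * b) + a * b := calc
    (b * a * b) * a = b * (a * b * a) := by noncomm_ring
    _ = (b * b) * a * b := by rw [hb]; noncomm_ring
    _ = (q - q⁻¹) • (b * a * b) + a * b := by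
      rw [hqb]; simp only [add_mul, smul_mul_assoc, one_mul]
  calc a * (b * (a * x * a + a) * b + b)
      = a * (b * (a * x * a) * b) + a * (b * a * b) + a * b := by noncomm_ring
    _ = (b * (a * x * a) * b) * a + (b * a * b) * a + b * a := by
      rw [hbaxab, hleft, hright]; abel
    _ = (b * (a * x * a + a) * b + b) * a := by noncomm_ring

theorem commute_jucysMurphy_of_add_two_le (H : HeckeRelations q n T) (hij : j + 2 ≤ i)
    (hi : i < n) : Commute (T j) (jucysMurphy T i) := by
  induction i, hij using Nat.le_induction with
  | base => exact H.commute_jucysMurphy_add_two hi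
  | succ i hij ih =>
    have hT : Commute (T j) (T i) := H.comm j i hij hi
    exact ((hT.mul_right (ih (by omega))).mul_right hT).add_right hT

theorem commute_jucysMurphy (H : HeckeRelations q n T) (hi : i + 1 < n) (hj : j < n)
    (hji : j ≠ i) (hji' : j ≠ i + 1) : Commute (T i) (jucysMurphy T j) := by
  rcases lt_or_ge j i with hlt | hle
  · exact H.commute_jucysMurphy_of_lt hlt hi
  · exact H.commute_jucysMurphy_of_add_two_le (by omega) hj

theorem jucysMurphy_commute_of_lt (H : HeckeRelations q n T) (hij : j < i) (hi : i < n) :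
    Commute (jucysMurphy T i) (jucysMurphy T j) := by
  induction j with
  | zero => exact Commute.zero_right _
  | succ j ih =>
    have hT : Commute (jucysMurphy T i) (T j) :=
      (H.commute_jucysMurphy_of_add_two_le hij hi).symm
    exact ((hT.mul_right (ih (by omega))).mul_right hT).add_right hT

theorem jucysMurphy_commute (H : HeckeRelations q n T) (hi : i < n) (hj : j < n) :
    Commute (jucysMurphy T i) (jucysMurphy T j) := by
  rcases lt_trichotomy i j with h | rfl | h
  · exact (H.jucysMurphy_commute_of_lt h hj).symm
  · exact Commute.refl _
  · exact H.jucysMurphy_commute_of_lt h hi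

theorem jucysMurphy_succ_mul (H : HeckeRelations q n T) (hi : i + 1 < n) :
    jucysMurphy T (i + 1) * T i =
      T i * jucysMurphy T i + 1 + (q - q⁻¹) • jucysMurphy T (i + 1) := by
  simp only [jucysMurphy]
  rw [add_mul, mul_assoc (T i * jucysMurphy T i), H.quad i hi, mul_add, mul_smul_comm, mul_one,
    smul_add]
  abel

theorem mul_jucysMurphy_succ (H : HeckeRelations q n T) (hi : i + 1 < n) :
    T i * jucysMurphy T (i + 1) =
      jucysMurphy T i * T i + 1 + (q - q⁻¹) • jucysMurphy T (i + 1) := by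
  simp only [jucysMurphy]
  rw [mul_add, ← mul_assoc, ← mul_assoc, H.quad i hi]
  simp only [add_mul, smul_mul_assoc, one_mul, smul_add]
  abel

end HeckeRelations

/-- The intertwiner `T_i (L_i - L_{i+1}) + (1 + (q - q⁻¹) L_{i+1})`, which exchanges the
eigenvalues of `L_i` and `L_{i+1}`. -/
def intertwiner (q : K) (T : ℕ → A) (i : ℕ) : A :=
  T i * (jucysMurphy T i - jucysMurphy T (i + 1)) + (1 + (q - q⁻¹) • jucysMurphy T (i + 1))

namespace HeckeRelations

variable {q : K} {n : ℕ} {T : ℕ → A} {i j : ℕ}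

theorem intertwiner_mul_jucysMurphy (H : HeckeRelations q n T) (hi : i + 1 < n) :
    intertwiner q T i * jucysMurphy T i = jucysMurphy T (i + 1) * intertwiner q T i := by
  have hcomm := (H.jucysMurphy_commute (i := i) (by omega) hi).eq
  rw [intertwiner, mul_add (jucysMurphy T (i + 1)), ← mul_assoc (jucysMurphy T (i + 1)),
    H.jucysMurphy_succ_mul hi]
  simp only [mul_add, add_mul, mul_sub, sub_mul, one_mul, mul_one, smul_mul_assoc,
    mul_smul_comm, mul_assoc, hcomm]
  abel

theorem intertwiner_mul_jucysMurphy_succ (H : HeckeRelations q n T) (hi : i + 1 < n) :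
    intertwiner q T i * jucysMurphy T (i + 1) = jucysMurphy T i * intertwiner q T i := by
  have hcomm := (H.jucysMurphy_commute (i := i) (by omega) hi).eq
  rw [intertwiner, mul_add (jucysMurphy T i), ← mul_assoc (jucysMurphy T i),
    show jucysMurphy T i * T i = T i * jucysMurphy T (i + 1) - 1
      - (q - q⁻¹) • jucysMurphy T (i + 1) by rw [H.mul_jucysMurphy_succ hi]; abel]
  simp only [mul_add, add_mul, mul_sub, sub_mul, one_mul, mul_one, smul_mul_assoc,
    mul_smul_comm, mul_assoc, hcomm]
  abel

theorem intertwiner_mul_gen (H : HeckeRelations q n T) (hi : i + 1 < n) :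
    intertwiner q T i * T i =
      -(T i * (1 + (q - q⁻¹) • jucysMurphy T (i + 1))) + (jucysMurphy T (i + 1) - jucysMurphy T i)
        + (q - q⁻¹) • (1 + (q - q⁻¹) • jucysMurphy T (i + 1)) := by
  have hquad := H.quad i hi
  have hyt := H.jucysMurphy_succ_mul hi
  have hxt : jucysMurphy T i * T i = T i * jucysMurphy T (i + 1) - 1
      - (q - q⁻¹) • jucysMurphy T (i + 1) := by rw [H.mul_jucysMurphy_succ hi]; abel
  rw [intertwiner]
  generalize jucysMurphy T (i + 1) = y at *
  generalize jucysMurphy T i = x at *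
  generalize T i = t at *
  have hexpand : (t * (x - y) + (1 + (q - q⁻¹) • y)) * t =
      t * (x * t) - t * (y * t) + t + (q - q⁻¹) • (y * t) := by
    simp only [add_mul, mul_sub, sub_mul, one_mul, smul_mul_assoc, mul_assoc, add_assoc]
  rw [hexpand, hxt, hyt]
  simp only [mul_add, mul_sub, smul_add, mul_smul_comm, ← mul_assoc, hquad, mul_one]
  simp only [add_mul, smul_mul_assoc, one_mul]
  abel

theorem intertwiner_mul_self (H : HeckeRelations q n T) (hi : i + 1 < n) :
    intertwiner q T i * intertwiner q T i =
      (1 + (q - q⁻¹) • jucysMurphy T (i + 1)) * (1 + (q - q⁻¹) • jucysMurphy T i)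
        - (jucysMurphy T (i + 1) - jucysMurphy T i) *
          (jucysMurphy T (i + 1) - jucysMurphy T i) := by
  have hcomm := (H.jucysMurphy_commute (i := i) (by omega) hi).eq
  have hexpand : intertwiner q T i * intertwiner q T i =
      intertwiner q T i * T i * (jucysMurphy T i - jucysMurphy T (i + 1))
        + intertwiner q T i * (1 + (q - q⁻¹) • jucysMurphy T (i + 1)) := by
    rw [mul_assoc, ← mul_add, ← intertwiner]
  rw [hexpand, H.intertwiner_mul_gen hi, intertwiner]
  simp only [mul_add, add_mul, mul_sub, sub_mul, one_mul, mul_one, smul_mul_assoc,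
    mul_smul_comm, mul_assoc, hcomm, smul_add, smul_sub, neg_mul]
  abel

theorem intertwiner_commute_jucysMurphy (H : HeckeRelations q n T) (hi : i + 1 < n) (hj : j < n)
    (hji : j ≠ i) (hji' : j ≠ i + 1) : Commute (intertwiner q T i) (jucysMurphy T j) := by
  have hL := H.jucysMurphy_commute (i := i) (j := j) (by omega) hj
  have hL' := H.jucysMurphy_commute (i := i + 1) (j := j) hi hj
  exact ((H.commute_jucysMurphy hi hj hji hji').mul_left (hL.sub_left hL')).add_left
    ((Commute.one_left _).add_left (hL'.smul_left _))

end HeckeRelations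

end HeckeRelations

/-! ### Weight spaces of the Jucys–Murphy elements -/

section SeminormalDiag

variable {K : Type*} [Field K] {q : K} {n : ℕ} {d : ℤ}

/-- The diagonal matrix coefficient of `T_i` on a vector of weight `c` in Young's seminormal form,
where `d = c (i + 1) - c i`. -/
noncomputable def seminormalDiag (q : K) (d : ℤ) : K := q ^ (2 * d) / contentValue q d

theorem seminormalDiag_one (hq : q ≠ 0) : seminormalDiag q 1 = q := by
  rw [seminormalDiag, contentValue_one hq]
  field_simp
  norm_num

theorem seminormalDiag_neg_one (hq : q ≠ 0) : seminormalDiag q (-1) = -q⁻¹ := by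
  have hpow : q ^ (2 * -1 : ℤ) = q⁻¹ * q⁻¹ := by
    rw [← zpow_neg_one, ← zpow_add₀ hq]
    norm_num
  rw [seminormalDiag, contentValue_neg_one hq, hpow, div_neg,
    mul_div_cancel_right₀ _ (inv_ne_zero hq)]

theorem IsGenericParameter.sub_mul_seminormalDiag (G : IsGenericParameter q n) {a b : ℤ}
    (hab : b - a ≠ 0) (hn : |b - a| ≤ n) :
    (contentValue q b - contentValue q a) * seminormalDiag q (b - a) = q ^ (2 * b) := by
  rw [contentValue_sub G.ne_zero, seminormalDiag, mul_assoc,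
    mul_div_cancel₀ _ (G.contentValue_ne_zero _ hab hn), ← zpow_add₀ G.ne_zero]
  ring_nf

theorem IsGenericParameter.add_inv_ne_zero (G : IsGenericParameter q n) (hn : 2 ≤ n) :
    q + q⁻¹ ≠ 0 := by
  intro h
  refine G.contentValue_ne_zero (1 + 1) (by decide) (by norm_num; exact_mod_cast hn) ?_
  have hq := G.ne_zero
  rw [contentValue_add_one hq, contentValue_one hq, mul_one, zpow_ofNat]
  calc q + q ^ 2 * q = q ^ 2 * (q + q⁻¹) := by field_simp; ring
    _ = 0 := by rw [h, mul_zero]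

end SeminormalDiag

section Weights

variable {K V : Type*} [Field K] [AddCommGroup V] [Module K V]

/-- The joint eigenspace of `L_0, …, L_{k-1}` with the eigenvalues prescribed by the contents
`c 0, …, c (k - 1)`. -/
noncomputable def weightSpace (q : K) (T : ℕ → Module.End K V) (k : ℕ) (c : ℕ → ℤ) :
    Submodule K V :=
  ⨅ j : Fin k, (jucysMurphy T j).eigenspace (contentValue q (c j))

/-- On the weight spaces of content vectors `L_k` is semisimple, and its eigenvalues there come
from the contents that can follow. -/
structure HasContentSpectrum (q : K) (T : ℕ → Module.End K V) (k : ℕ) : Prop where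
  exists_isNextContent : ∀ {c : ℕ → ℤ}, IsContentVector k c → ∀ {v : V}, v ∈ weightSpace q T k c →
    v ≠ 0 → ∀ {β : K}, jucysMurphy T k v = β • v →
    ∃ b, IsNextContent k c b ∧ β = contentValue q b
  eq_smul_of_eq_smul : ∀ {c : ℕ → ℤ}, IsContentVector k c → ∀ {v : V}, v ∈ weightSpace q T k c →
    ∀ {β : K}, jucysMurphy T k (jucysMurphy T k v - β • v) = β • (jucysMurphy T k v - β • v) →
    jucysMurphy T k v = β • v

variable {q : K} {T : ℕ → Module.End K V} {k l n i : ℕ} {c d : ℕ → ℤ} {v : V} {a b : ℤ}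

theorem mem_weightSpace :
    v ∈ weightSpace q T k c ↔ ∀ j < k, jucysMurphy T j v = contentValue q (c j) • v := by
  simp only [weightSpace, Submodule.mem_iInf, Module.End.mem_eigenspace_iff, Fin.forall_iff]

theorem weightSpace_congr (h : ∀ j < k, c j = d j) : weightSpace q T k c = weightSpace q T k d :=
  iInf_congr fun j => by rw [h j j.2]

theorem weightSpace_succ : weightSpace q T (k + 1) c =
    weightSpace q T k c ⊓ (jucysMurphy T k).eigenspace (contentValue q (c k)) := by
  ext v
  simp only [Submodule.mem_inf, mem_weightSpace, Module.End.mem_eigenspace_iff,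
    Nat.lt_succ_iff_lt_or_eq, or_imp, forall_and, forall_eq]

theorem weightSpace_anti (hlk : l ≤ k) : weightSpace q T k c ≤ weightSpace q T l c :=
  fun _ hv => mem_weightSpace.2 fun j hj => mem_weightSpace.1 hv j (hj.trans_le hlk)

theorem mem_weightSpace_update (hv : v ∈ weightSpace q T k c)
    (hb : jucysMurphy T k v = contentValue q b • v) :
    v ∈ weightSpace q T (k + 1) (Function.update c k b) := by
  rw [weightSpace_succ, Function.update_self]
  refine ⟨?_, Module.End.mem_eigenspace_iff.2 hb⟩
  rwa [weightSpace_congr fun j hj => Function.update_of_ne hj.ne _ _]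

theorem apply_mem_weightSpace {x : Module.End K V} (hx : ∀ j < k, Commute x (jucysMurphy T j))
    (hv : v ∈ weightSpace q T k c) : x v ∈ weightSpace q T k c := by
  refine mem_weightSpace.2 fun j hj => ?_
  rw [← Module.End.mul_apply, ← (hx j hj).eq, Module.End.mul_apply, mem_weightSpace.1 hv j hj,
    map_smul]

variable (G : IsGenericParameter q n) (H : HeckeRelations q n T)
include G H

theorem eq_zero_of_repeated_content (hk : k + 1 < n) (hS : HasContentSpectrum q T k)
    (hc : IsContentVector k c) (hv : v ∈ weightSpace q T (k + 2) c) (hck : c k = c (k + 1)) :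
    v = 0 := by
  have hx := mem_weightSpace.1 hv k (by omega)
  have hy := mem_weightSpace.1 hv (k + 1) (by omega)
  rw [← hck] at hy
  have hTv : T k v ∈ weightSpace q T k c :=
    apply_mem_weightSpace (fun j hj => H.commute_jucysMurphy hk (by omega) (by omega) (by omega))
      (weightSpace_anti (by omega) hv)
  have hshift : jucysMurphy T k (T k v) - contentValue q (c k) • T k v = -q ^ (2 * c k) • v := by
    have hrel := LinearMap.congr_fun (H.mul_jucysMurphy_succ hk) v
    simp only [Module.End.mul_apply, LinearMap.add_apply, Module.End.one_apply,
      LinearMap.smul_apply, hy, map_smul] at hrel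
    rw [hrel, ← one_add_mul_contentValue G.ne_zero]
    module
  have hzero := sub_eq_zero.2 (hS.eq_smul_of_eq_smul hc hTv
    (by rw [hshift, map_smul, hx, smul_comm]))
  rw [hshift] at hzero
  exact (smul_eq_zero.1 hzero).resolve_left (neg_ne_zero.2 (zpow_ne_zero _ G.ne_zero))

omit G in
theorem intertwiner_apply_mem_weightSpace (hln : l ≤ n) (hi : i + 1 < l)
    (hv : v ∈ weightSpace q T l c) :
    intertwiner q T i v ∈ weightSpace q T l (swapAdjacent i c) := by
  rw [mem_weightSpace] at *
  intro j hj
  rw [← Module.End.mul_apply]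
  by_cases hji : j = i
  · subst hji
    rw [swapAdjacent_left, ← H.intertwiner_mul_jucysMurphy_succ (by omega), Module.End.mul_apply,
      hv _ hi, map_smul]
  by_cases hji' : j = i + 1
  · subst hji'
    rw [swapAdjacent_right, ← H.intertwiner_mul_jucysMurphy (by omega), Module.End.mul_apply,
      hv _ (by omega), map_smul]
  · rw [swapAdjacent_of_ne _ hji hji',
      ← (H.intertwiner_commute_jucysMurphy (by omega) (by omega) hji hji').eq,
      Module.End.mul_apply, hv _ hj, map_smul]

omit G in
theorem intertwiner_apply_mem_weightSpace_of_le (hi : i + 1 < n) (hli : l ≤ i)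
    (hv : v ∈ weightSpace q T l c) : intertwiner q T i v ∈ weightSpace q T l c :=
  apply_mem_weightSpace (fun j hj => H.intertwiner_commute_jucysMurphy hi (by omega) (by omega)
    (by omega)) hv

omit H in
theorem intertwiner_apply (hv : v ∈ weightSpace q T l c) (hi : i + 1 < l)
    (hci : c (i + 1) - c i ≠ 0) (hn : |c (i + 1) - c i| ≤ n) :
    intertwiner q T i v = (contentValue q (c i) - contentValue q (c (i + 1))) •
      (T i v - seminormalDiag q (c (i + 1) - c i) • v) := by
  have hdiag : (contentValue q (c i) - contentValue q (c (i + 1))) *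
      seminormalDiag q (c (i + 1) - c i) = -(1 + (q - q⁻¹) * contentValue q (c (i + 1))) := by
    rw [one_add_mul_contentValue G.ne_zero]
    linear_combination -G.sub_mul_seminormalDiag hci hn
  rw [mem_weightSpace] at hv
  simp only [intertwiner, LinearMap.add_apply, Module.End.mul_apply, LinearMap.sub_apply,
    Module.End.one_apply, LinearMap.smul_apply, hv i (by omega), hv (i + 1) hi, ← sub_smul,
    map_smul, smul_sub, smul_smul]
  rw [hdiag]
  module

theorem intertwiner_apply_apply (hi : i + 1 < n) {ε : ℤ} (hε : ε = 1 ∨ ε = -1)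
    (hv : jucysMurphy T i v = contentValue q a • v) :
    intertwiner q T i (intertwiner q T i v) =
      -(jucysMurphy T (i + 1) (jucysMurphy T (i + 1) v - contentValue q (a + ε) • v)
        - contentValue q (a - ε) • (jucysMurphy T (i + 1) v - contentValue q (a + ε) • v)) := by
  have hxy : jucysMurphy T i (jucysMurphy T (i + 1) v) =
      contentValue q a • jucysMurphy T (i + 1) v := by
    rw [← map_smul, ← hv]
    exact LinearMap.congr_fun (H.jucysMurphy_commute (by omega) hi).eq v
  rw [← Module.End.mul_apply, H.intertwiner_mul_self hi]
  have hlhs : ((1 + (q - q⁻¹) • jucysMurphy T (i + 1)) * (1 + (q - q⁻¹) • jucysMurphy T i)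
      - (jucysMurphy T (i + 1) - jucysMurphy T i) * (jucysMurphy T (i + 1) - jucysMurphy T i)) v =
      (q ^ (2 * a) - contentValue q a ^ 2) • v
        + ((q - q⁻¹) * q ^ (2 * a) + 2 * contentValue q a) • jucysMurphy T (i + 1) v
        - jucysMurphy T (i + 1) (jucysMurphy T (i + 1) v) := by
    rw [← one_add_mul_contentValue G.ne_zero]
    simp only [LinearMap.sub_apply, Module.End.mul_apply, LinearMap.add_apply,
      Module.End.one_apply, LinearMap.smul_apply, map_sub, map_add, map_smul, hv, hxy]
    module
  rw [hlhs, ← contentValue_add_add_contentValue_sub G.ne_zero a hε,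
    ← neg_sub (contentValue q a ^ 2), ← contentValue_add_mul_contentValue_sub G.ne_zero a hε,
    map_sub, map_smul]
  module

theorem intertwiner_apply_apply_of_eigenvector (hi : i + 1 < n) {ε : ℤ} (hε : ε = 1 ∨ ε = -1)
    (hx : jucysMurphy T i v = contentValue q a • v)
    (hy : jucysMurphy T (i + 1) v = contentValue q b • v) :
    intertwiner q T i (intertwiner q T i v) =
      -((contentValue q b - contentValue q (a - ε)) *
        (contentValue q b - contentValue q (a + ε))) • v := by
  rw [intertwiner_apply_apply G H hi hε hx, hy, ← sub_smul, map_smul, hy]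
  module

theorem sub_eq_of_intertwiner_apply_eq_zero (hi : i + 1 < n)
    (hx : jucysMurphy T i v = contentValue q a • v)
    (hy : jucysMurphy T (i + 1) v = contentValue q b • v) (hn : |b - a| + 1 ≤ n)
    (h0 : intertwiner q T i v = 0) (hv : v ≠ 0) : b = a + 1 ∨ b = a - 1 := by
  have hsq := intertwiner_apply_apply_of_eigenvector G H hi (.inl rfl) hx hy
  rw [h0, map_zero, eq_comm, smul_eq_zero, or_iff_left hv, neg_eq_zero, mul_eq_zero, sub_eq_zero,
    sub_eq_zero] at hsq
  rcases hsq with h | h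
  · exact .inr (G.contentValue_injective (by rw [Int.abs_eq_natAbs] at *; omega) h)
  · exact .inl (G.contentValue_injective (by rw [Int.abs_eq_natAbs] at *; omega) h)

omit H in
theorem IsNextContent.contentValue_add_ne (hkn : k + 2 ≤ n) (hc : IsContentVector k c)
    (ha : IsNextContent k c a) (hb : IsNextContent k c b) {ε : ℤ} (hε : ε = 1 ∨ ε = -1) :
    contentValue q b ≠ contentValue q (a + ε) := by
  intro hval
  have hab := ha.abs_sub_le hc hb
  obtain rfl : b = a + ε :=
    G.contentValue_injective (by rw [Int.abs_eq_natAbs] at *; omega) hval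
  rcases hε with rfl | rfl
  · exact ha.not_add_one hc hb
  · exact hb.not_add_one hc (by simpa using ha)

theorem intertwiner_apply_eq_zero_of_adjacent (hk : k + 1 < n) (hS : HasContentSpectrum q T k)
    (hc : IsContentVector (k + 1) c) (hv : v ∈ weightSpace q T (k + 2) c) {ε : ℤ}
    (hε : ε = 1 ∨ ε = -1) (hck : c (k + 1) = c k + ε) : intertwiner q T k v = 0 := by
  by_contra h0
  have hck0 : IsContentVector k c := hc.mono k.le_succ
  have heig : jucysMurphy T k (intertwiner q T k v) =
      contentValue q (c k + ε) • intertwiner q T k v := by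
    rw [← hck, ← map_smul, ← mem_weightSpace.1 hv (k + 1) (by omega), ← Module.End.mul_apply,
      ← H.intertwiner_mul_jucysMurphy_succ hk, Module.End.mul_apply]
  obtain ⟨b, hb, hval⟩ := hS.exists_isNextContent hck0
    (intertwiner_apply_mem_weightSpace_of_le H hk le_rfl (weightSpace_anti (by omega) hv)) h0 heig
  exact IsNextContent.contentValue_add_ne G hk hck0 (hc k k.lt_succ_self) hb hε hval.symm

omit H in
theorem gen_apply_eq_smul_of_intertwiner_apply_eq_zero (hv : v ∈ weightSpace q T l c)
    (hi : i + 1 < l) {ε : ℤ} (hε : ε = 1 ∨ ε = -1) (hci : c (i + 1) - c i = ε) (hn : 1 ≤ n)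
    (h0 : intertwiner q T i v = 0) : T i v = seminormalDiag q ε • v := by
  have hε0 : ε ≠ 0 := by omega
  have hεn : |ε| ≤ n := by rw [Int.abs_eq_natAbs]; omega
  rw [intertwiner_apply G hv hi (hci ▸ hε0) (hci ▸ hεn), hci, smul_eq_zero, sub_eq_zero] at h0
  refine sub_eq_zero.1 (h0.resolve_left fun hval => hε0 ?_)
  rw [← hci, sub_eq_zero]
  exact (G.contentValue_injective (by rwa [abs_sub_comm, hci]) hval).symm

theorem eq_zero_of_contents_zigzag (hk : k + 2 < n) (hS : HasContentSpectrum q T k)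
    (hc : IsContentVector (k + 2) c) {ε : ℤ} (hε : ε = 1 ∨ ε = -1) (hck : c k = c (k + 1) + ε)
    (hck' : c (k + 2) = c (k + 1) + ε) (hv : v ∈ weightSpace q T (k + 3) c) : v = 0 := by
  by_contra hv0
  have hck0 : IsContentVector k c := hc.mono (by omega)
  have hφ : intertwiner q T k v = 0 :=
    intertwiner_apply_eq_zero_of_adjacent G H (by omega) hS (hc.mono (by omega))
      (weightSpace_anti (by omega) hv) (ε := -ε) (by omega) (by omega)
  have hφ' : intertwiner q T (k + 1) v = 0 := by
    have hmem := intertwiner_apply_mem_weightSpace H (i := k + 1) (by omega) (by omega) hv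
    refine eq_zero_of_repeated_content G H (by omega) hS
      ((isContentVector_congr fun j hj => ?_).1 hck0) (weightSpace_anti (by omega) hmem) ?_
    · exact (swapAdjacent_of_ne c (by omega) (by omega)).symm
    · rw [swapAdjacent_left, swapAdjacent_of_ne c (by omega) (by omega), hck, hck']
  have hT : T k v = seminormalDiag q (-ε) • v :=
    gen_apply_eq_smul_of_intertwiner_apply_eq_zero G hv (by omega) (by omega) (by omega)
      (by omega) hφ
  have hT' : T (k + 1) v = seminormalDiag q ε • v :=
    gen_apply_eq_smul_of_intertwiner_apply_eq_zero G hv (by omega) hε (sub_eq_of_eq_add' hck')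
      (by omega) hφ'
  have hbraid := LinearMap.congr_fun (H.braid k hk) v
  simp only [Module.End.mul_apply, hT, hT', map_smul, smul_smul] at hbraid
  have hdiag := smul_left_injective K hv0 hbraid
  have hq := G.ne_zero
  apply G.add_inv_ne_zero (by omega)
  rcases hε with rfl | rfl <;>
    simp only [neg_neg, seminormalDiag_one hq, seminormalDiag_neg_one hq] at hdiag <;>
    field_simp at hdiag ⊢
  · linear_combination hdiag
  · linear_combination -hdiag

/-- Swaps move the box at position `p` next to those at `k` and `k + 1`, where the braid relation
forbids the contents `a + ε, a, a + ε`. -/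
theorem eq_zero_of_contents_recur {m : ℕ} : ∀ {p k : ℕ}, k = p + 1 + m → k + 1 < n →
    (∀ j ≤ k, HasContentSpectrum q T j) → ∀ {c : ℕ → ℤ}, IsContentVector (k + 1) c → ∀ {ε : ℤ},
    (ε = 1 ∨ ε = -1) → c p = c k + ε →
    (∀ r, p < r → r < k → c r ≠ c k ∧ c r ≠ c k + ε ∧ c r ≠ c k + 2 * ε) →
    c (k + 1) = c k + ε → ∀ {v : V}, v ∈ weightSpace q T (k + 2) c → v = 0 := by
  induction m with
  | zero =>
    intro p k hk hkn hS c hc ε hε hp _ hck v hv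
    obtain rfl : k = p + 1 := hk
    exact eq_zero_of_contents_zigzag G H hkn (hS p (by omega)) hc hε hp hck hv
  | succ m ih =>
    intro p k hk hkn hS c hc ε hε hp hr hck v hv
    have hpr := hr (p + 1) (by omega) (by omega)
    have hdist : |c (p + 1) - c p| < (k + 1 : ℕ) := hc.abs_sub_lt (by omega) (by omega)
    have hfar : 2 ≤ |c (p + 1) - c p| := by rw [Int.abs_eq_natAbs]; omega
    have hswap : ∀ r, p + 1 < r → swapAdjacent p c r = c r :=
      fun r hr => swapAdjacent_of_ne c (by omega) (by omega)
    have hφ : intertwiner q T p v = 0 := by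
      refine ih (p := p + 1) (by omega) hkn hS (hc.swapAdjacent (by omega) hfar) hε ?_ ?_ ?_
        (intertwiner_apply_mem_weightSpace H (by omega) (by omega) hv)
      · rw [swapAdjacent_right, hswap k (by omega), hp]
      · intro r hpr hrk
        rw [hswap k (by omega), hswap r hpr]
        exact hr r (by omega) hrk
      · rw [hswap k (by omega), hswap (k + 1) (by omega), hck]
    by_contra hv0
    have hnear := sub_eq_of_intertwiner_apply_eq_zero G H (by omega)
      (mem_weightSpace.1 hv p (by omega)) (mem_weightSpace.1 hv (p + 1) (by omega))
      (by push_cast at hdist; omega) hφ hv0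
    rw [Int.abs_eq_natAbs] at hfar
    omega

end Weights

section Spectrum

variable {K V : Type*} [Field K] [AddCommGroup V] [Module K V] {q : K} {T : ℕ → Module.End K V}
  {k n i : ℕ} {c : ℕ → ℤ} {v : V} {b : ℤ} {β : K}

variable (G : IsGenericParameter q n) (H : HeckeRelations q n T)
include G H

theorem isNextContent_succ_of_weight (hk : k + 1 < n) (hS : ∀ j ≤ k, HasContentSpectrum q T j)
    (hc : IsContentVector (k + 1) c) (hv : v ∈ weightSpace q T (k + 1) c) (hv0 : v ≠ 0)
    (hb : b = c k + 1 ∨ b = c k - 1 ∨ IsNextContent k c b)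
    (hbv : jucysMurphy T (k + 1) v = contentValue q b • v) : IsNextContent (k + 1) c b := by
  have hvb := mem_weightSpace_update hv hbv
  have hcb : ∀ j < k + 1, Function.update c (k + 1) b j = c j :=
    fun j hj => Function.update_of_ne hj.ne _ _
  have hlast : Function.update c (k + 1) b (k + 1) = b := Function.update_self ..
  have hck : IsContentVector (k + 1) (Function.update c (k + 1) b) :=
    (isContentVector_congr hcb).2 hc
  have hne : b ≠ c k := by
    rintro rfl
    exact hv0 (eq_zero_of_repeated_content G H hk (hS k le_rfl) (hck.mono k.le_succ) hvb
      (by rw [hlast, hcb k k.lt_succ_self]))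
  have hadj : ∀ ε : ℤ, ε = 1 ∨ ε = -1 → b = c k + ε → IsNextContent (k + 1) c b := by
    rintro ε hε rfl
    by_contra hnext
    obtain ⟨p, hp, hpε, hbetween⟩ := hc.exists_of_not_isNextContent hε hnext
    refine hv0 (eq_zero_of_contents_recur G H (m := k - (p + 1)) (p := p) (by omega) hk hS hck hε
      ?_ (fun r hpr hrk => ?_) ?_ hvb)
    · rw [hcb p (by omega), hcb k k.lt_succ_self, hpε]
    · rw [hcb r (by omega), hcb k k.lt_succ_self]
      exact hbetween r hpr hrk
    · rw [hlast, hcb k k.lt_succ_self]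
  rcases hb with hb | hb | hb
  · exact hadj 1 (.inl rfl) hb
  · exact hadj (-1) (.inr rfl) hb
  · refine hb.succ (Nat.pos_of_ne_zero ?_) hne
    rintro rfl
    exact hne ((hb.zero rfl).trans ((hc 0 Nat.one_pos).zero rfl).symm)

theorem exists_isNextContent_succ (hk : k + 1 < n) (hS : ∀ j ≤ k, HasContentSpectrum q T j)
    (hc : IsContentVector (k + 1) c) (hv : v ∈ weightSpace q T (k + 1) c) (hv0 : v ≠ 0)
    (hβ : jucysMurphy T (k + 1) v = β • v) :
    ∃ b, IsNextContent (k + 1) c b ∧ β = contentValue q b := by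
  suffices ∃ b, (b = c k + 1 ∨ b = c k - 1 ∨ IsNextContent k c b) ∧ β = contentValue q b by
    obtain ⟨b, hb, rfl⟩ := this
    exact ⟨b, isNextContent_succ_of_weight G H hk hS hc hv hv0 hb hβ, rfl⟩
  by_cases hφ : intertwiner q T k v = 0
  · have hsq := intertwiner_apply_apply G H hk (.inl rfl) (mem_weightSpace.1 hv k k.lt_succ_self)
    rw [hφ, map_zero, hβ, ← sub_smul, map_smul, hβ, smul_smul, smul_smul, ← sub_smul, eq_comm,
      neg_eq_zero, smul_eq_zero, or_iff_left hv0, mul_comm, ← sub_mul, mul_eq_zero, sub_eq_zero,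
      sub_eq_zero] at hsq
    rcases hsq with h | h
    · exact ⟨_, .inr (.inl rfl), h⟩
    · exact ⟨_, .inl rfl, h⟩
  · have hmem := intertwiner_apply_mem_weightSpace_of_le H hk le_rfl
      (weightSpace_anti k.le_succ hv)
    have heig : jucysMurphy T k (intertwiner q T k v) = β • intertwiner q T k v := by
      rw [← Module.End.mul_apply, ← H.intertwiner_mul_jucysMurphy_succ hk, Module.End.mul_apply,
        hβ, map_smul]
    obtain ⟨b, hb, hval⟩ :=
      (hS k le_rfl).exists_isNextContent (hc.mono k.le_succ) hmem hφ heig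
    exact ⟨b, .inr (.inr hb), hval⟩

theorem eq_smul_of_eq_smul_succ (hk : k + 1 < n) (hS : ∀ j ≤ k, HasContentSpectrum q T j)
    (hc : IsContentVector (k + 1) c) (hv : v ∈ weightSpace q T (k + 1) c)
    (hβ : jucysMurphy T (k + 1) (jucysMurphy T (k + 1) v - β • v) =
      β • (jucysMurphy T (k + 1) v - β • v)) :
    jucysMurphy T (k + 1) v = β • v := by
  have hck : IsContentVector k c := hc.mono k.le_succ
  have hx := mem_weightSpace.1 hv k k.lt_succ_self
  have hφv := intertwiner_apply_mem_weightSpace_of_le H hk le_rfl (weightSpace_anti k.le_succ hv)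
  have hφL : ∀ u, jucysMurphy T k (intertwiner q T k u) =
      intertwiner q T k (jucysMurphy T (k + 1) u) :=
    fun u => (LinearMap.congr_fun (H.intertwiner_mul_jucysMurphy_succ hk) u).symm
  have hw : jucysMurphy T (k + 1) v - β • v ∈ weightSpace q T (k + 1) c :=
    sub_mem (apply_mem_weightSpace (fun j hj => H.jucysMurphy_commute hk (by omega)) hv)
      (Submodule.smul_mem _ _ hv)
  by_contra hne
  have hw0 : jucysMurphy T (k + 1) v - β • v ≠ 0 := sub_ne_zero.2 hne
  obtain ⟨b, hb, rfl⟩ := exists_isNextContent_succ G H hk hS hc hw hw0 hβ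
  have hdist : |b - c k| + 1 ≤ n := by
    have := (isContentVector_update.2 ⟨hc, hb⟩).abs_sub_lt (m := k + 1) (p := k) (by omega)
      (by omega)
    rw [Function.update_self, Function.update_of_ne k.lt_succ_self.ne] at this
    push_cast at this
    omega
  have hφw : intertwiner q T k (jucysMurphy T (k + 1) v - contentValue q b • v) = 0 := by
    have hsq := (hS k le_rfl).eq_smul_of_eq_smul hck hφv (β := contentValue q b) <| by
      rw [hφL, ← map_smul (intertwiner q T k), ← map_sub, hφL, hβ, map_smul]
    rw [map_sub, map_smul, ← hφL, hsq, sub_self]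
  obtain ⟨ε, hε, rfl⟩ : ∃ ε : ℤ, (ε = 1 ∨ ε = -1) ∧ b = c k + ε := by
    rcases sub_eq_of_intertwiner_apply_eq_zero G H hk (mem_weightSpace.1 hw k k.lt_succ_self) hβ
      hdist hφw hw0 with h | h
    exacts [⟨1, .inl rfl, h⟩, ⟨-1, .inr rfl, h⟩]
  have hφ0 : intertwiner q T k v = 0 := by
    by_contra hφ0
    rw [map_sub, map_smul, ← hφL, sub_eq_zero] at hφw
    obtain ⟨b', hb', hval⟩ := (hS k le_rfl).exists_isNextContent hck hφv hφ0 hφw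
    exact IsNextContent.contentValue_add_ne G hk hck (hc k k.lt_succ_self) hb' hε hval.symm
  have hsq := intertwiner_apply_apply G H hk hε hx
  rw [hφ0, map_zero, hβ, ← sub_smul, eq_comm, neg_eq_zero, smul_eq_zero, or_iff_left hw0,
    sub_eq_zero] at hsq
  have hval := G.contentValue_injective (by rw [Int.abs_eq_natAbs]; omega) hsq
  omega

theorem hasContentSpectrum (hk : k < n) : HasContentSpectrum q T k := by
  induction k using Nat.strong_induction_on with
  | _ k ih =>
    rcases k with _ | k
    · constructor
      · intro c _ v _ hv0 β hβ
        refine ⟨0, ⟨fun _ => rfl, fun h => absurd h (lt_irrefl 0),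
          fun p hp => absurd hp p.not_lt_zero⟩, ?_⟩
        rw [jucysMurphy, LinearMap.zero_apply, eq_comm, smul_eq_zero, or_iff_left hv0] at hβ
        rw [hβ, contentValue_zero]
      · intro c _ v _ β hβ
        have hβv : β = 0 ∨ v = 0 := by simpa [jucysMurphy] using hβ
        rw [jucysMurphy, LinearMap.zero_apply, smul_eq_zero.2 hβv]
    · have hS : ∀ j ≤ k, HasContentSpectrum q T j := fun j hj => ih j (by omega) (by omega)
      exact ⟨fun hc _ hv hv0 _ hβ => exists_isNextContent_succ G H hk hS hc hv hv0 hβ,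
        fun hc _ hv _ hβ => eq_smul_of_eq_smul_succ G H hk hS hc hv hβ⟩

end Spectrum

section Decomposition

theorem exists_linearMap_of_isInternal {K V W ι : Type*} [DecidableEq ι] [CommRing K]
    [AddCommGroup V] [Module K V] [AddCommGroup W] [Module K W] {U : ι → Submodule K V}
    (hU : DirectSum.IsInternal U) (f : ι → V →ₗ[K] W) :
    ∃ g : V →ₗ[K] W, ∀ i, ∀ v ∈ U i, g v = f i v := by
  let e := LinearEquiv.ofBijective (DirectSum.coeLinearMap U) hU
  refine ⟨DirectSum.toModule K ι W (fun i => f i ∘ₗ (U i).subtype) ∘ₗ e.symm.toLinearMap,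
    fun i v hv => ?_⟩
  have hv' : e.symm v = DirectSum.lof K ι (fun i => U i) i ⟨v, hv⟩ := by
    rw [LinearEquiv.symm_apply_eq]
    exact (DirectSum.coeLinearMap_lof U i ⟨v, hv⟩).symm
  rw [LinearMap.comp_apply, LinearEquiv.coe_coe, hv', DirectSum.toModule_lof,
    LinearMap.comp_apply, Submodule.subtype_apply]

/-- Content vectors with `n` entries, with `0` as the value of the irrelevant further entries. -/
def ContentVector (n : ℕ) : Type :=
  {c : ℕ → ℤ // IsContentVector n c ∧ ∀ j, n ≤ j → c j = 0}

variable {K V : Type*} [Field K] [AddCommGroup V] [Module K V] {q : K} {T : ℕ → Module.End K V}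
  {k n : ℕ} {c : ℕ → ℤ} {v : V} {β : K}

theorem IsContentVector.exists_contentVector (h : IsContentVector n c) :
    ∃ d : ContentVector n, ∀ j < n, c j = d.1 j := by
  have hcd : ∀ j < n, c j = if j < n then c j else 0 := fun j hj => (if_pos hj).symm
  exact ⟨⟨fun j => if j < n then c j else 0, (isContentVector_congr hcd).1 h,
    fun j hj => if_neg hj.not_gt⟩, hcd⟩

theorem IsGenericParameter.contentValue_comp_injective (G : IsGenericParameter q n) :
    Function.Injective fun (c : ContentVector n) (j : Fin n) => contentValue q (c.1 j) := by
  rintro ⟨c, hc, hc0⟩ ⟨d, hd, hd0⟩ hcd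
  refine Subtype.ext (funext fun j => ?_)
  change c j = d j
  induction j using Nat.strong_induction_on with
  | _ j ih =>
    rcases le_or_gt n j with hj | hj
    · rw [hc0 j hj, hd0 j hj]
    · have hdist := (hc j hj).abs_sub_le (hc.mono hj.le)
        ((hd j hj).congr fun i hi => (ih i hi).symm)
      exact G.contentValue_injective (by omega) (congrFun hcd ⟨j, hj⟩)

theorem HasContentSpectrum.apply_eq_smul_of_mem_maxGenEigenspace (hS : HasContentSpectrum q T k)
    (hc : IsContentVector k c) (hL : ∀ j < k, Commute (jucysMurphy T k) (jucysMurphy T j))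
    (hv : v ∈ weightSpace q T k c) (hβ : v ∈ (jucysMurphy T k).maxGenEigenspace β) :
    jucysMurphy T k v = β • v := by
  obtain ⟨m, hm⟩ := Module.End.mem_maxGenEigenspace _ _ _ |>.1 hβ
  clear hβ
  induction m generalizing v with
  | zero =>
    obtain rfl : v = 0 := hm
    rw [map_zero, smul_zero]
  | succ m ih =>
    rw [pow_succ, Module.End.mul_apply] at hm
    exact hS.eq_smul_of_eq_smul hc hv
      (ih (sub_mem (apply_mem_weightSpace hL hv) (Submodule.smul_mem _ _ hv)) hm)

variable (G : IsGenericParameter q n) (H : HeckeRelations q n T)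
include G H

theorem iSupIndep_weightSpace :
    iSupIndep fun c : ContentVector n => weightSpace q T n c.1 := by
  have hindep := Module.End.independent_iInf_maxGenEigenspace_of_forall_mapsTo
    (fun j : Fin n => jucysMurphy T j) fun i j φ =>
      Module.End.mapsTo_maxGenEigenspace_of_comm (H.jucysMurphy_commute j.2 i.2) φ
  refine (hindep.comp G.contentValue_comp_injective).mono fun c => iInf_mono fun j => ?_
  exact (Module.End.genEigenspace _ _).mono le_top

variable [IsAlgClosed K] [FiniteDimensional K V]

theorem weightSpace_le_iSup_weightSpace_succ (hk : k < n) (hc : IsContentVector k c) :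
    weightSpace q T k c ≤
      ⨆ b, ⨆ _ : IsNextContent k c b, weightSpace q T (k + 1) (Function.update c k b) := by
  have hL : ∀ j < k, Commute (jucysMurphy T k) (jucysMurphy T j) :=
    fun j hj => H.jucysMurphy_commute hk (hj.trans hk)
  have hS := hasContentSpectrum G H hk
  rw [← inf_top_eq (weightSpace q T k c),
    ← Module.End.iSup_maxGenEigenspace_eq_top (jucysMurphy T k),
    Submodule.inf_iSup_genEigenspace fun v hv => apply_mem_weightSpace hL hv]
  refine iSup_le fun β v hv => ?_
  rcases eq_or_ne v 0 with rfl | hv0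
  · exact Submodule.zero_mem _
  have heig := hS.apply_eq_smul_of_mem_maxGenEigenspace hc hL hv.1 hv.2
  obtain ⟨b, hb, rfl⟩ := hS.exists_isNextContent hc hv.1 hv0 heig
  exact Submodule.mem_iSup_of_mem b
    (Submodule.mem_iSup_of_mem hb (mem_weightSpace_update hv.1 heig))

theorem iSup_weightSpace_eq_top :
    ⨆ c : ContentVector n, weightSpace q T n c.1 = ⊤ := by
  suffices ∀ k ≤ n, ⨆ c : ContentVector k, weightSpace q T k c.1 = ⊤ from this n le_rfl
  intro k hk
  induction k with
  | zero =>
    let c : ContentVector 0 := ⟨0, fun m hm => absurd hm m.not_lt_zero, fun _ _ => rfl⟩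
    refine top_le_iff.1 fun v _ => Submodule.mem_iSup_of_mem c ?_
    exact mem_weightSpace.2 fun j hj => absurd hj j.not_lt_zero
  | succ k ih =>
    rw [← top_le_iff, ← ih (by omega)]
    refine iSup_le fun c => (weightSpace_le_iSup_weightSpace_succ G H hk c.2.1).trans ?_
    refine iSup₂_le fun b hb => le_iSup_of_le (ι := ContentVector (k + 1)) ⟨_,
      isContentVector_update.2 ⟨c.2.1, hb⟩, fun j hj => ?_⟩ le_rfl
    rw [Function.update_of_ne (by omega), c.2.2 j (by omega)]

theorem linearMap_ext_of_weightSpace {W : Type*} [AddCommGroup W] [Module K W] {f g : V →ₗ[K] W}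
    (hfg : ∀ c, IsContentVector n c → ∀ v ∈ weightSpace q T n c, f v = g v) : f = g := by
  refine LinearMap.ext fun v => ?_
  have hv : v ∈ ⨆ c : ContentVector n, weightSpace q T n c.1 := by
    rw [iSup_weightSpace_eq_top G H]
    exact Submodule.mem_top
  have hle : ⨆ c : ContentVector n, weightSpace q T n c.1 ≤ LinearMap.eqLocus f g :=
    iSup_le fun c => hfg c.1 c.2.1
  exact hle hv

theorem exists_linearMap_of_weightSpace {W : Type*} [AddCommGroup W] [Module K W]
    {f : (ℕ → ℤ) → V →ₗ[K] W} (hf : ∀ c d, (∀ j < n, c j = d j) → f c = f d) :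
    ∃ g : V →ₗ[K] W, ∀ c, IsContentVector n c → ∀ v ∈ weightSpace q T n c, g v = f c v := by
  classical
  obtain ⟨g, hg⟩ := exists_linearMap_of_isInternal
    (U := fun c : ContentVector n => weightSpace q T n c.1)
    (DirectSum.isInternal_submodule_of_iSupIndep_of_iSup_eq_top (iSupIndep_weightSpace G H)
      (iSup_weightSpace_eq_top G H)) fun c => f c.1
  refine ⟨g, fun c hc v hv => ?_⟩
  obtain ⟨d, hcd⟩ := hc.exists_contentVector
  have hvd : v ∈ weightSpace q T n d.1 := by rwa [← weightSpace_congr hcd]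
  rw [hg d v hvd, hf c d.1 hcd]

end Decomposition

/-! ### The seminormal form -/

section SeminormalOffDiag

variable {K : Type*} [Field K] {q q' : K} {n : ℕ} {d u v : ℤ}

/-- The off-diagonal matrix coefficient in Young's seminormal form, `d` being the difference of the
contents as in `seminormalDiag`; in this normalization it vanishes exactly at `d = -1`. -/
noncomputable def seminormalOffDiag (q : K) (d : ℤ) : K :=
  contentValue q (d + 1) / (q * contentValue q d)

theorem seminormalDiag_neg (hq : q ≠ 0) (hd : contentValue q d ≠ 0) :
    seminormalDiag q (-d) = (q - q⁻¹) - seminormalDiag q d := by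
  have hneg := contentValue_eq_neg hq (-d)
  rw [neg_neg] at hneg
  have hpow := one_add_mul_contentValue hq d
  have hpow0 : q ^ (2 * -d) ≠ 0 := zpow_ne_zero _ hq
  rw [seminormalDiag, seminormalDiag, hneg, neg_mul, div_neg, div_mul_cancel_left₀ hpow0,
    eq_sub_iff_add_eq, ← hpow, inv_eq_one_div, ← neg_div, ← add_div, div_eq_iff hd]
  ring

theorem seminormalDiag_add_mul (hq : q ≠ 0) (hu : contentValue q u ≠ 0)
    (hv : contentValue q v ≠ 0) (huv : contentValue q (u + v) ≠ 0) :
    seminormalDiag q (u + v) * (seminormalDiag q u + seminormalDiag q v - (q - q⁻¹)) =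
      seminormalDiag q u * seminormalDiag q v := by
  have hpow : q ^ (2 * (u + v)) = q ^ (2 * u) * q ^ (2 * v) := by
    rw [← zpow_add₀ hq]
    ring_nf
  have hadd := contentValue_sub hq (u + v) v
  rw [add_sub_cancel_right] at hadd
  have hpu := one_add_mul_contentValue hq u
  have hsum : q ^ (2 * u) / contentValue q u + q ^ (2 * v) / contentValue q v - (q - q⁻¹) =
      contentValue q (u + v) / (contentValue q u * contentValue q v) := by
    rw [div_add_div _ _ hu hv, div_sub' (mul_ne_zero hu hv)]
    congr 1
    linear_combination -hadd - contentValue q v * hpu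
  rw [seminormalDiag, seminormalDiag, seminormalDiag, hsum, hpow, div_mul_div_cancel₀ huv,
    div_mul_div_comm]

theorem seminormalDiag_mul_contentValue_add (hq : q ≠ 0) {a b : ℤ}
    (hab : contentValue q (b - a) ≠ 0) :
    seminormalDiag q (b - a) * contentValue q a +
      seminormalDiag q (-(b - a)) * contentValue q b + 1 = 0 := by
  have hpow : q ^ (2 * b) = q ^ (2 * (b - a)) * q ^ (2 * a) := by
    rw [← zpow_add₀ hq]
    ring_nf
  have hdiag : seminormalDiag q (b - a) * contentValue q (b - a) = q ^ (2 * (b - a)) :=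
    div_mul_cancel₀ _ hab
  rw [seminormalDiag_neg hq hab]
  linear_combination one_add_mul_contentValue hq b + hpow - q ^ (2 * a) * hdiag -
    seminormalDiag q (b - a) * contentValue_sub hq b a

theorem seminormalOffDiag_neg (hq : q ≠ 0) (d : ℤ) :
    seminormalOffDiag q (-d) = q * contentValue q (d - 1) / contentValue q d := by
  have hpow : q ^ (2 * (d - 1)) * q ^ 2 = q ^ (2 * d) := by
    rw [← zpow_natCast, ← zpow_add₀ hq]
    ring_nf
  have hpow0 : q ^ (2 * (d - 1)) ≠ 0 := zpow_ne_zero _ hq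
  rw [seminormalOffDiag, contentValue_eq_neg hq d, contentValue_eq_neg hq (d - 1), neg_sub,
    neg_add_eq_sub, ← hpow]
  field_simp

theorem seminormalOffDiag_mul_neg (hq : q ≠ 0) (hd : contentValue q d ≠ 0) :
    seminormalOffDiag q d * seminormalOffDiag q (-d) =
      1 + seminormalDiag q d * seminormalDiag q (-d) := by
  rw [seminormalOffDiag_neg hq, seminormalDiag_neg hq hd, seminormalOffDiag, seminormalDiag,
    contentValue_add_one hq, contentValue_sub_one hq, ← one_add_mul_contentValue hq d]
  field_simp
  ring

theorem seminormalOffDiag_neg_one (q : K) : seminormalOffDiag q (-1) = 0 := by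
  rw [seminormalOffDiag, neg_add_cancel, contentValue_zero, zero_div]

theorem IsGenericParameter.seminormalOffDiag_ne_zero (G : IsGenericParameter q n) (hd : d ≠ 0)
    (hd' : d ≠ -1) (hn : |d| < n) : seminormalOffDiag q d ≠ 0 := by
  rw [Int.abs_eq_natAbs] at hn
  refine div_ne_zero (G.contentValue_ne_zero _ (by omega) ?_)
    (mul_ne_zero G.ne_zero (G.contentValue_ne_zero _ hd ?_)) <;>
  · rw [Int.abs_eq_natAbs]
    omega

/-- The factor by which the off-diagonal part of a generator is rescaled in the deformation from `q`
to `q'`. -/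
noncomputable def seminormalRatio (q q' : K) (d : ℤ) : K :=
  seminormalOffDiag q' d / seminormalOffDiag q d

theorem seminormalRatio_self (G : IsGenericParameter q n) (hd : d ≠ 0)
    (hd' : d ≠ -1) (hn : |d| < n) : seminormalRatio q q d = 1 :=
  div_self (G.seminormalOffDiag_ne_zero hd hd' hn)

end SeminormalOffDiag

section ContentStep

variable {n i j : ℕ} {c : ℕ → ℤ}

/-- The difference of two consecutive contents, the argument of the matrix coefficients of `T_i`. -/
def contentStep (i : ℕ) (c : ℕ → ℤ) : ℤ := c (i + 1) - c i

theorem contentStep_swapAdjacent (i : ℕ) (c : ℕ → ℤ) :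
    contentStep i (swapAdjacent i c) = -contentStep i c := by
  rw [contentStep, swapAdjacent_left, swapAdjacent_right, contentStep, neg_sub]

theorem contentStep_succ_swapAdjacent (i : ℕ) (c : ℕ → ℤ) :
    contentStep (i + 1) (swapAdjacent i c) = contentStep i c + contentStep (i + 1) c := by
  rw [contentStep, swapAdjacent_right, swapAdjacent_of_ne c (by omega) (by omega), contentStep,
    contentStep, add_comm (_ - _), sub_add_sub_cancel]

theorem contentStep_swapAdjacent_succ (i : ℕ) (c : ℕ → ℤ) :
    contentStep i (swapAdjacent (i + 1) c) = contentStep i c + contentStep (i + 1) c := by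
  rw [contentStep, swapAdjacent_left, swapAdjacent_of_ne c (by omega) (by omega), contentStep,
    contentStep, add_comm (_ - _), sub_add_sub_cancel]

theorem contentStep_swapAdjacent_of_far (c : ℕ → ℤ) (hij : i + 2 ≤ j ∨ j + 2 ≤ i) :
    contentStep i (swapAdjacent j c) = contentStep i c := by
  rw [contentStep, swapAdjacent_of_ne c (by omega) (by omega),
    swapAdjacent_of_ne c (by omega) (by omega), contentStep]

theorem IsContentVector.contentStep_ne_zero (h : IsContentVector n c) (hi : i + 1 < n) :
    contentStep i c ≠ 0 := by
  intro hc
  obtain ⟨⟨r, hir, hri, -⟩, -⟩ :=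
    (h (i + 1) hi).exists_between i i.lt_succ_self (sub_eq_zero.1 hc).symm
  omega

theorem IsContentVector.contentStep_add_ne_zero (h : IsContentVector n c) (hi : i + 2 < n) :
    contentStep i c + contentStep (i + 1) c ≠ 0 := by
  intro hc
  rw [contentStep, contentStep, add_comm, sub_add_sub_cancel, sub_eq_zero] at hc
  obtain ⟨⟨r, hir, hri, hr⟩, ⟨s, his, hsi, hs⟩⟩ :=
    (h (i + 2) hi).exists_between i (by omega) hc.symm
  obtain rfl : r = i + 1 := by omega
  obtain rfl : s = i + 1 := by omega
  omega

theorem IsContentVector.abs_contentStep_lt (h : IsContentVector n c) (hi : i + 1 < n) :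
    |contentStep i c| < n :=
  h.abs_sub_lt hi (by omega)

theorem IsContentVector.abs_contentStep_add_lt (h : IsContentVector n c) (hi : i + 2 < n) :
    |contentStep i c + contentStep (i + 1) c| < n := by
  rw [contentStep, contentStep, add_comm, sub_add_sub_cancel]
  exact h.abs_sub_lt hi (by omega)

end ContentStep

section OffDiagonal

variable {K V : Type*} [Field K] [AddCommGroup V] [Module K V]

/-- The weight space of `c` if `c` is a content vector, and zero otherwise. -/
noncomputable def contentSpace (q : K) (T : ℕ → Module.End K V) (n : ℕ) (c : ℕ → ℤ) :
    Submodule K V :=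
  ⨆ _ : IsContentVector n c, weightSpace q T n c

/-- The off-diagonal part of `T_i` on vectors of weight `c`. -/
noncomputable def offDiagonal (q : K) (T : ℕ → Module.End K V) (i : ℕ) (c : ℕ → ℤ) :
    Module.End K V :=
  T i - seminormalDiag q (contentStep i c) • 1

variable {q : K} {T : ℕ → Module.End K V} {n i j : ℕ} {c : ℕ → ℤ} {v : V}

theorem mem_contentSpace (hc : IsContentVector n c) :
    v ∈ contentSpace q T n c ↔ v ∈ weightSpace q T n c := by
  rw [contentSpace, iSup_pos hc]

theorem eq_zero_or_isContentVector (hv : v ∈ contentSpace q T n c) :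
    v = 0 ∨ IsContentVector n c := by
  by_cases hc : IsContentVector n c
  · exact .inr hc
  · rw [contentSpace, iSup_neg hc] at hv
    exact .inl hv

theorem offDiagonal_apply (q : K) (T : ℕ → Module.End K V) (i : ℕ) (c : ℕ → ℤ) (v : V) :
    offDiagonal q T i c v = T i v - seminormalDiag q (contentStep i c) • v :=
  rfl

theorem IsGenericParameter.contentValue_contentStep_ne_zero (G : IsGenericParameter q n)
    (hc : IsContentVector n c) (hi : i + 1 < n) : contentValue q (contentStep i c) ≠ 0 :=
  G.contentValue_ne_zero _ (hc.contentStep_ne_zero hi) (hc.abs_contentStep_lt hi).le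

theorem IsGenericParameter.contentValue_sub_contentValue_succ_ne_zero
    (G : IsGenericParameter q n) (hc : IsContentVector n c) (hi : i + 1 < n) :
    contentValue q (c i) - contentValue q (c (i + 1)) ≠ 0 := by
  intro hval
  have hstep := G.contentValue_injective (hc.abs_sub_lt (by omega : i < n) hi).le
    (sub_eq_zero.1 hval)
  exact hc.contentStep_ne_zero hi (sub_eq_zero.2 hstep.symm)

theorem HeckeRelations.offDiagonal_apply_comm (H : HeckeRelations q n T) (hij : i + 2 ≤ j)
    (hj : j + 1 < n) (c : ℕ → ℤ) (v : V) :
    offDiagonal q T i (swapAdjacent j c) (offDiagonal q T j c v) =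
      offDiagonal q T j (swapAdjacent i c) (offDiagonal q T i c v) := by
  have hcomm : T i (T j v) = T j (T i v) := LinearMap.congr_fun (H.comm i j hij hj).eq v
  simp only [offDiagonal_apply, contentStep_swapAdjacent_of_far c (.inl hij),
    contentStep_swapAdjacent_of_far c (.inr hij), map_sub, map_smul, hcomm]
  module

variable (G : IsGenericParameter q n) (H : HeckeRelations q n T)
include G

theorem intertwiner_apply_eq_smul_offDiagonal (hi : i + 1 < n) (hc : IsContentVector n c)
    (hv : v ∈ weightSpace q T n c) : intertwiner q T i v =
      (contentValue q (c i) - contentValue q (c (i + 1))) • offDiagonal q T i c v :=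
  intertwiner_apply G hv hi (hc.contentStep_ne_zero hi) (hc.abs_contentStep_lt hi).le

include H

theorem offDiagonal_apply_eq_zero (hi : i + 1 < n) (hv : v ∈ contentSpace q T n c)
    (hd : contentStep i c = 1 ∨ contentStep i c = -1) : offDiagonal q T i c v = 0 := by
  rcases eq_zero_or_isContentVector hv with rfl | hc
  · exact map_zero _
  rw [mem_contentSpace hc] at hv
  have hφ : intertwiner q T i v = 0 :=
    intertwiner_apply_eq_zero_of_adjacent G H hi (hasContentSpectrum G H (by omega))
      (hc.mono hi.le) (weightSpace_anti (by omega) hv) hd (add_sub_cancel _ _).symm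
  rw [intertwiner_apply_eq_smul_offDiagonal G hi hc hv] at hφ
  exact (smul_eq_zero.1 hφ).resolve_left (G.contentValue_sub_contentValue_succ_ne_zero hc hi)

theorem offDiagonal_apply_mem_contentSpace (hi : i + 1 < n) (hv : v ∈ contentSpace q T n c) :
    offDiagonal q T i c v ∈ contentSpace q T n (swapAdjacent i c) := by
  rcases eq_zero_or_isContentVector hv with rfl | hc
  · exact (map_zero (offDiagonal q T i c)).symm ▸ zero_mem _
  by_cases hd : contentStep i c = 1 ∨ contentStep i c = -1
  · exact (offDiagonal_apply_eq_zero G H hi hv hd).symm ▸ zero_mem _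
  have hd2 : 2 ≤ |contentStep i c| := by
    have hd0 := hc.contentStep_ne_zero hi
    rw [Int.abs_eq_natAbs]
    omega
  rw [mem_contentSpace hc] at hv
  have hφ := intertwiner_apply_mem_weightSpace H le_rfl hi hv
  rw [intertwiner_apply_eq_smul_offDiagonal G hi hc hv] at hφ
  rw [mem_contentSpace (hc.swapAdjacent hi hd2)]
  exact (Submodule.smul_mem_iff _ (G.contentValue_sub_contentValue_succ_ne_zero hc hi)).1 hφ

theorem offDiagonal_apply_apply (hi : i + 1 < n) (hv : v ∈ contentSpace q T n c) :
    offDiagonal q T i (swapAdjacent i c) (offDiagonal q T i c v) =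
      (seminormalOffDiag q (contentStep i c) * seminormalOffDiag q (-contentStep i c)) • v := by
  rcases eq_zero_or_isContentVector hv with rfl | hc
  · simp only [map_zero, smul_zero]
  have hz := G.contentValue_contentStep_ne_zero hc hi
  have hquad := LinearMap.congr_fun (H.quad i hi) v
  simp only [Module.End.mul_apply, LinearMap.add_apply, LinearMap.smul_apply,
    Module.End.one_apply] at hquad
  rw [seminormalOffDiag_mul_neg G.ne_zero hz, offDiagonal_apply, offDiagonal_apply,
    contentStep_swapAdjacent, seminormalDiag_neg G.ne_zero hz, map_sub, map_smul, hquad]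
  module

end OffDiagonal

/-! ### Change of the parameter -/

section Ratio

variable {K : Type*} [Field K] {q q' : K} {n : ℕ} {d : ℤ}

theorem IsGenericParameter.seminormalRatio_mul_seminormalOffDiag (G : IsGenericParameter q n)
    (hd : d ≠ 0) (hn : |d| < n) :
    seminormalRatio q q' d * seminormalOffDiag q d = seminormalOffDiag q' d := by
  rcases eq_or_ne d (-1) with rfl | hd'
  · rw [seminormalOffDiag_neg_one, seminormalOffDiag_neg_one, mul_zero]
  · exact div_mul_cancel₀ _ (G.seminormalOffDiag_ne_zero hd hd' hn)

theorem IsGenericParameter.seminormalRatio_mul_swap (G : IsGenericParameter q n)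
    (G' : IsGenericParameter q' n) (hd : d ≠ 0) (hd' : d ≠ -1) (hn : |d| < n) :
    seminormalRatio q' q d * seminormalRatio q q' d = 1 := by
  rw [seminormalRatio, seminormalRatio,
    div_mul_div_cancel₀ (G'.seminormalOffDiag_ne_zero hd hd' hn),
    div_self (G.seminormalOffDiag_ne_zero hd hd' hn)]

theorem IsGenericParameter.seminormalRatio_mul_neg (G : IsGenericParameter q n)
    (G' : IsGenericParameter q' n) (hd : d ≠ 0) (hn : |d| < n) :
    seminormalRatio q q' d * (seminormalRatio q q' (-d) *
      (seminormalOffDiag q d * seminormalOffDiag q (-d))) =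
      1 + seminormalDiag q' d * ((q' - q'⁻¹) - seminormalDiag q' d) := by
  have hz := G'.contentValue_ne_zero d hd hn.le
  rw [← seminormalDiag_neg G'.ne_zero hz, ← seminormalOffDiag_mul_neg G'.ne_zero hz,
    ← G.seminormalRatio_mul_seminormalOffDiag (q' := q') hd hn,
    ← G.seminormalRatio_mul_seminormalOffDiag (q' := q') (neg_ne_zero.2 hd) (by rwa [abs_neg])]
  ring

theorem seminormalRatio_eq_zero_of_self_eq_zero (h : seminormalRatio q q d = 0) :
    seminormalRatio q q' d = 0 := by
  have h0 : seminormalOffDiag q d = 0 := or_self_iff.1 (div_eq_zero_iff.1 h)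
  rw [seminormalRatio, h0, div_zero]

end Ratio

section Deformation

variable {K V : Type*} [Field K] [AddCommGroup V] [Module K V]

/-- The braid relation on the span of the up to six weight vectors that two neighbouring generators
produce from `v`. The coefficients `x`, `y`, `z` are diagonal and `ξ`, `η`, `ζ` off-diagonal, for
the content differences `d`, `e` and `d + e`. -/
theorem braid_sub_braid_apply_eq_smul {S₁ S₂ : Module.End K V} {v v₁ v₂ v₁₂ v₂₁ v₁₂₁ v₂₁₂ : V}
    {t x y z ξ η ζ ξ' η' : K}
    (hS₁v : S₁ v = x • v + ξ • v₁) (hS₂v : S₂ v = y • v + η • v₂)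
    (hS₂v₁ : S₂ v₁ = z • v₁ + ζ • v₂₁) (hS₁v₂ : S₁ v₂ = z • v₂ + ζ • v₁₂)
    (hS₁v₁ : S₁ v₁ = (t - x) • v₁ + ξ' • v) (hS₂v₂ : S₂ v₂ = (t - y) • v₂ + η' • v)
    (hS₁v₂₁ : S₁ v₂₁ = y • v₂₁ + η • v₁₂₁) (hS₂v₁₂ : S₂ v₁₂ = x • v₁₂ + ξ • v₂₁₂)
    (hξ : ξ * ξ' = 1 + x * (t - x)) (hη : η * η' = 1 + y * (t - y))
    (hz : z * (x + y - t) = x * y) :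
    S₁ (S₂ (S₁ v)) - S₂ (S₁ (S₂ v)) = (ξ * η * ζ) • (v₁₂₁ - v₂₁₂) := by
  simp only [hS₁v, hS₂v, hS₂v₁, hS₁v₂, hS₁v₁, hS₂v₂, hS₁v₂₁, hS₂v₁₂, map_add, map_smul, smul_add,
    smul_smul]
  match_scalars
  · linear_combination z * hξ - z * hη - (x - y) * hz
  · linear_combination -ξ * hz
  · linear_combination η * hz
  all_goals ring

/-- `S` acts on the weight spaces of `T` by Young's seminormal form with parameter `q'` in place of
`q`, the off-diagonal parts of `T` being rescaled. -/
def IsSeminormalDeformation (q q' : K) (n : ℕ) (T S : ℕ → Module.End K V) : Prop :=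
  ∀ i, i + 1 < n → ∀ c, ∀ v ∈ contentSpace q T n c,
    S i v = seminormalDiag q' (contentStep i c) • v +
      seminormalRatio q q' (contentStep i c) • offDiagonal q T i c v

variable {q q' : K} {n i j k : ℕ} {T S : ℕ → Module.End K V} {c : ℕ → ℤ} {v : V}

theorem isSeminormalDeformation_self (G : IsGenericParameter q n) (H : HeckeRelations q n T) :
    IsSeminormalDeformation q q n T T := by
  intro i hi c v hv
  rcases eq_zero_or_isContentVector hv with rfl | hc
  · simp only [map_zero, smul_zero, add_zero]
  by_cases hd : contentStep i c = 1 ∨ contentStep i c = -1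
  · have hzero := offDiagonal_apply_eq_zero G H hi hv hd
    rw [hzero, smul_zero, add_zero]
    exact sub_eq_zero.1 hzero
  · rw [seminormalRatio_self G (hc.contentStep_ne_zero hi) (fun h => hd (.inr h))
      (hc.abs_contentStep_lt hi), one_smul, offDiagonal_apply, add_sub_cancel]

namespace IsSeminormalDeformation

variable (P : IsSeminormalDeformation q q' n T S) (G : IsGenericParameter q n)
  (G' : IsGenericParameter q' n) (H : HeckeRelations q n T)
include G G' P H

theorem apply_offDiagonal (hc : IsContentVector n c) (hv : v ∈ contentSpace q T n c)
    (hi : i + 1 < n) : S i (offDiagonal q T i c v) =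
      ((q' - q'⁻¹) - seminormalDiag q' (contentStep i c)) • offDiagonal q T i c v +
      (seminormalRatio q q' (-contentStep i c) *
        (seminormalOffDiag q (contentStep i c) * seminormalOffDiag q (-contentStep i c))) • v := by
  rw [P i hi _ _ (offDiagonal_apply_mem_contentSpace G H hi hv), offDiagonal_apply_apply G H hi hv,
    contentStep_swapAdjacent,
    seminormalDiag_neg G'.ne_zero (G'.contentValue_contentStep_ne_zero hc hi), smul_smul]

theorem quad_apply (hv : v ∈ contentSpace q T n c) (hi : i + 1 < n) :
    S i (S i v) = (q' - q'⁻¹) • S i v + v := by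
  rcases eq_zero_or_isContentVector hv with rfl | hc
  · simp only [map_zero, smul_zero, add_zero]
  rw [P i hi c v hv, map_add, map_smul, map_smul, P.apply_offDiagonal G G' H hc hv hi,
    P i hi c v hv]
  match_scalars
  · linear_combination G.seminormalRatio_mul_neg G' (hc.contentStep_ne_zero hi)
      (hc.abs_contentStep_lt hi)
  · ring

omit G' in
theorem comm_apply (hv : v ∈ contentSpace q T n c) (hij : i + 2 ≤ j) (hj : j + 1 < n) :
    S i (S j v) = S j (S i v) := by
  have hi : i + 1 < n := by omega
  rw [P i hi c v hv, P j hj c v hv]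
  simp only [map_add, map_smul]
  rw [P i hi c v hv, P j hj c v hv, P i hi _ _ (offDiagonal_apply_mem_contentSpace G H hj hv),
    P j hj _ _ (offDiagonal_apply_mem_contentSpace G H hi hv),
    contentStep_swapAdjacent_of_far c (.inl hij), contentStep_swapAdjacent_of_far c (.inr hij),
    H.offDiagonal_apply_comm hij hj]
  module

theorem braid_sub_braid_apply (hc : IsContentVector n c) (hv : v ∈ contentSpace q T n c)
    (hi : i + 2 < n) : S i (S (i + 1) (S i v)) - S (i + 1) (S i (S (i + 1) v)) =
      (seminormalRatio q q' (contentStep i c) * seminormalRatio q q' (contentStep (i + 1) c) *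
        seminormalRatio q q' (contentStep i c + contentStep (i + 1) c)) •
      (offDiagonal q T i (swapAdjacent (i + 1) (swapAdjacent i c))
          (offDiagonal q T (i + 1) (swapAdjacent i c) (offDiagonal q T i c v)) -
        offDiagonal q T (i + 1) (swapAdjacent i (swapAdjacent (i + 1) c))
          (offDiagonal q T i (swapAdjacent (i + 1) c) (offDiagonal q T (i + 1) c v))) := by
  have hi₁ : i + 1 < n := by omega
  have hmem : ∀ {j : ℕ} {d : ℕ → ℤ} {w : V}, j + 1 < n → w ∈ contentSpace q T n d →
      offDiagonal q T j d w ∈ contentSpace q T n (swapAdjacent j d) :=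
    fun hj hw => offDiagonal_apply_mem_contentSpace G H hj hw
  have hstep₁ : contentStep i (swapAdjacent (i + 1) (swapAdjacent i c)) =
      contentStep (i + 1) c := by
    rw [contentStep_swapAdjacent_succ, contentStep_swapAdjacent, contentStep_succ_swapAdjacent,
      neg_add_cancel_left]
  have hstep₂ : contentStep (i + 1) (swapAdjacent i (swapAdjacent (i + 1) c)) =
      contentStep i c := by
    rw [contentStep_succ_swapAdjacent, contentStep_swapAdjacent, contentStep_swapAdjacent_succ,
      add_neg_cancel_right]
  refine braid_sub_braid_apply_eq_smul
    (v₂₁ := offDiagonal q T (i + 1) (swapAdjacent i c) (offDiagonal q T i c v))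
    (v₁₂ := offDiagonal q T i (swapAdjacent (i + 1) c) (offDiagonal q T (i + 1) c v))
    (P i hi₁ c v hv) (P (i + 1) hi c v hv) ?_ ?_
    (P.apply_offDiagonal G G' H hc hv hi₁) (P.apply_offDiagonal G G' H hc hv hi) ?_ ?_
    (G.seminormalRatio_mul_neg G' (hc.contentStep_ne_zero hi₁) (hc.abs_contentStep_lt hi₁))
    (G.seminormalRatio_mul_neg G' (hc.contentStep_ne_zero hi) (hc.abs_contentStep_lt hi))
    (seminormalDiag_add_mul G'.ne_zero (G'.contentValue_contentStep_ne_zero hc hi₁)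
      (G'.contentValue_contentStep_ne_zero hc hi)
      (G'.contentValue_ne_zero _ (hc.contentStep_add_ne_zero hi) (hc.abs_contentStep_add_lt hi).le))
  · rw [P _ hi _ _ (hmem hi₁ hv), contentStep_succ_swapAdjacent]
  · rw [P _ hi₁ _ _ (hmem hi hv), contentStep_swapAdjacent_succ]
  · rw [P _ hi₁ _ _ (hmem hi (hmem hi₁ hv)), hstep₁]
  · rw [P _ hi _ _ (hmem hi₁ (hmem hi hv)), hstep₂]

theorem braid_apply (hv : v ∈ contentSpace q T n c) (hi : i + 2 < n) :
    S i (S (i + 1) (S i v)) = S (i + 1) (S i (S (i + 1) v)) := by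
  rcases eq_zero_or_isContentVector hv with rfl | hc
  · simp only [map_zero]
  have hself := (isSeminormalDeformation_self G H).braid_sub_braid_apply G G H hc hv hi
  have hbraid : T i (T (i + 1) (T i v)) = T (i + 1) (T i (T (i + 1) v)) :=
    LinearMap.congr_fun (H.braid i hi) v
  rw [hbraid, sub_self, eq_comm, smul_eq_zero, mul_eq_zero, mul_eq_zero] at hself
  rw [← sub_eq_zero, P.braid_sub_braid_apply G G' H hc hv hi]
  rcases hself with ((h | h) | h) | h
  · rw [seminormalRatio_eq_zero_of_self_eq_zero h, zero_mul, zero_mul, zero_smul]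
  · rw [seminormalRatio_eq_zero_of_self_eq_zero h, mul_zero, zero_mul, zero_smul]
  · rw [seminormalRatio_eq_zero_of_self_eq_zero h, mul_zero, zero_smul]
  · rw [h, smul_zero]

theorem jucysMurphy_apply (hk : k < n) (hv : v ∈ contentSpace q T n c) :
    jucysMurphy S k v = contentValue q' (c k) • v := by
  induction k generalizing c v with
  | zero =>
    rcases eq_zero_or_isContentVector hv with rfl | hc
    · rw [map_zero, smul_zero]
    · rw [jucysMurphy, LinearMap.zero_apply, (hc 0 hk).zero rfl, contentValue_zero, zero_smul]
  | succ k ih =>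
    rcases eq_zero_or_isContentVector hv with rfl | hc
    · rw [map_zero, smul_zero]
    have hz := G'.contentValue_contentStep_ne_zero hc hk
    have hratio := G.seminormalRatio_mul_neg G' (hc.contentStep_ne_zero hk)
      (hc.abs_contentStep_lt hk)
    have hdiag : seminormalDiag q' (contentStep k c) * contentValue q' (c k) +
        seminormalDiag q' (-contentStep k c) * contentValue q' (c (k + 1)) + 1 = 0 :=
      seminormalDiag_mul_contentValue_add G'.ne_zero hz
    rw [seminormalDiag_neg G'.ne_zero hz] at hdiag
    have hv' := ih (by omega) hv
    have hoff := ih (by omega) (offDiagonal_apply_mem_contentSpace G H hk hv)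
    rw [swapAdjacent_left] at hoff
    rw [jucysMurphy, LinearMap.add_apply, Module.End.mul_apply, Module.End.mul_apply, P k hk c v hv]
    simp only [map_add, map_smul, hv', hoff]
    rw [P k hk c v hv, P.apply_offDiagonal G G' H hc hv hk]
    match_scalars
    · linear_combination contentValue q' (c (k + 1)) * hratio +
        seminormalDiag q' (contentStep k c) * hdiag
    · linear_combination seminormalRatio q q' (contentStep k c) * hdiag

theorem contentSpace_le : contentSpace q T n c ≤ contentSpace q' S n c := by
  intro v hv
  rcases eq_zero_or_isContentVector hv with rfl | hc
  · exact zero_mem _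
  · exact (mem_contentSpace hc).2
      (mem_weightSpace.2 fun k hk => P.jucysMurphy_apply G G' H hk hv)

end IsSeminormalDeformation

end Deformation

section Existence

variable {K V : Type*} [Field K] [AddCommGroup V] [Module K V] [IsAlgClosed K]
  [FiniteDimensional K V] {q q' : K} {n i : ℕ} {T S : ℕ → Module.End K V}

theorem exists_isSeminormalDeformation (q' : K) (G : IsGenericParameter q n)
    (H : HeckeRelations q n T) : ∃ S, IsSeminormalDeformation q q' n T S := by
  have hex : ∀ i, ∃ S : Module.End K V, i + 1 < n → ∀ c, ∀ v ∈ contentSpace q T n c,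
      S v = seminormalDiag q' (contentStep i c) • v +
        seminormalRatio q q' (contentStep i c) • offDiagonal q T i c v := by
    intro i
    by_cases hi : i + 1 < n
    · have hstep : ∀ c d : ℕ → ℤ, (∀ j < n, c j = d j) → contentStep i c = contentStep i d :=
        fun c d hcd => by rw [contentStep, contentStep, hcd i (by omega), hcd (i + 1) hi]
      obtain ⟨S, hS⟩ := exists_linearMap_of_weightSpace G H (f := fun c =>
        seminormalDiag q' (contentStep i c) • 1 +
          seminormalRatio q q' (contentStep i c) • offDiagonal q T i c)
        fun c d hcd => by simp only [offDiagonal, hstep c d hcd]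
      refine ⟨S, fun _ c v hv => ?_⟩
      rcases eq_zero_or_isContentVector hv with rfl | hc
      · simp only [map_zero, smul_zero, add_zero]
      · exact hS c hc v ((mem_contentSpace hc).1 hv)
    · exact ⟨0, fun h => absurd h hi⟩
  choose S hS using hex
  exact ⟨S, hS⟩

namespace IsSeminormalDeformation

variable (P : IsSeminormalDeformation q q' n T S) (G : IsGenericParameter q n)
  (G' : IsGenericParameter q' n) (H : HeckeRelations q n T)
include P G G' H

theorem heckeRelations : HeckeRelations q' n S := by
  refine ⟨fun i hi => ?_, fun i hi => ?_, fun i j hij hj => ?_⟩ <;>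
    refine linearMap_ext_of_weightSpace G H fun c hc v hv => ?_ <;>
    replace hv := (mem_contentSpace hc).2 hv
  · exact P.quad_apply G G' H hv hi
  · exact P.braid_apply G G' H hv hi
  · exact P.comm_apply G H hv hij hj

theorem symm : IsSeminormalDeformation q' q n S T := by
  obtain ⟨T', hT'⟩ := exists_isSeminormalDeformation q G' (P.heckeRelations G G' H)
  suffices ∀ i, i + 1 < n → T' i = T i by
    intro i hi c v hv
    rw [← this i hi, hT' i hi c v hv]
  intro i hi
  refine linearMap_ext_of_weightSpace G H fun c hc v hv => ?_
  replace hv := (mem_contentSpace hc).2 hv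
  have hoff : offDiagonal q' S i c v =
      seminormalRatio q q' (contentStep i c) • offDiagonal q T i c v := by
    rw [offDiagonal_apply, P i hi c v hv, add_sub_cancel_left]
  rw [hT' i hi c v (P.contentSpace_le G G' H hv), hoff]
  by_cases hd : contentStep i c = 1 ∨ contentStep i c = -1
  · have hzero := offDiagonal_apply_eq_zero G H hi hv hd
    rw [hzero, smul_zero, smul_zero, add_zero]
    exact (sub_eq_zero.1 hzero).symm
  · rw [smul_smul, G.seminormalRatio_mul_swap G' (hc.contentStep_ne_zero hi)
      (fun h => hd (.inr h)) (hc.abs_contentStep_lt hi), one_smul, offDiagonal_apply,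
      add_sub_cancel]

omit G' in
theorem comp_eq_comp {W : Type*} [AddCommGroup W] [Module K W] {T₁ S₁ : ℕ → Module.End K W}
    (P₁ : IsSeminormalDeformation q q' n T₁ S₁) {F : V →ₗ[K] W}
    (hF : ∀ i, i + 1 < n → F ∘ₗ T i = T₁ i ∘ₗ F) (hi : i + 1 < n) :
    F ∘ₗ S i = S₁ i ∘ₗ F := by
  have hT : ∀ i, i + 1 < n → ∀ v, F (T i v) = T₁ i (F v) :=
    fun i hi v => LinearMap.congr_fun (hF i hi) v
  have hL : ∀ k < n, ∀ v, F (jucysMurphy T k v) = jucysMurphy T₁ k (F v) := by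
    intro k hk
    induction k with
    | zero => exact fun _ => map_zero F
    | succ k ih =>
      intro v
      simp only [jucysMurphy, LinearMap.add_apply, Module.End.mul_apply, map_add, hT k hk,
        ih (by omega)]
  refine linearMap_ext_of_weightSpace G H fun c hc v hv => ?_
  have hFv : F v ∈ weightSpace q T₁ n c := mem_weightSpace.2 fun k hk => by
    rw [← hL k hk, mem_weightSpace.1 hv k hk, map_smul]
  rw [LinearMap.comp_apply, LinearMap.comp_apply, P i hi c v ((mem_contentSpace hc).2 hv),
    P₁ i hi c _ ((mem_contentSpace hc).2 hFv)]
  simp only [offDiagonal_apply, map_add, map_sub, map_smul, hT i hi]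

end IsSeminormalDeformation

end Existence

section GenericDeformation

theorem heckeRelations_lmul_iff {K A : Type*} [Field K] [Ring A] [Algebra K A] {q : K} {n : ℕ}
    {t : ℕ → A} : HeckeRelations q n (fun i => Algebra.lmul K A (t i)) ↔ HeckeRelations q n t :=
  heckeRelations_comp_iff (F := Algebra.lmul K A) Algebra.lmul_injective

variable {K A : Type*} [Field K] [IsAlgClosed K] [Ring A] [Algebra K A] [FiniteDimensional K A]
  {q q' : K} {n : ℕ} {t : ℕ → A}

theorem HeckeRelations.exists_isSeminormalDeformation_lmul (q' : K) (G : IsGenericParameter q n)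
    (H : HeckeRelations q n t) : ∃ s : ℕ → A,
      IsSeminormalDeformation q q' n (fun i => Algebra.lmul K A (t i))
        fun i => Algebra.lmul K A (s i) := by
  have hL := heckeRelations_lmul_iff.2 H
  obtain ⟨S, hS⟩ := exists_isSeminormalDeformation q' G hL
  refine ⟨fun i => S i 1, fun i hi => ?_⟩
  have hSmul : S i = Algebra.lmul K A (S i 1) := by
    refine LinearMap.ext fun x => ?_
    have hright := hS.comp_eq_comp G hL hS (F := LinearMap.mulRight K x)
      (fun j _ => LinearMap.ext fun y => mul_assoc (t j) y x) hi
    simpa using (LinearMap.congr_fun hright 1).symm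
  intro c v hv
  exact (LinearMap.congr_fun hSmul v).symm.trans (hS i hi c v hv)

theorem IsSeminormalDeformation.mem_subalgebra {s : ℕ → A}
    (P : IsSeminormalDeformation q q' n (fun i => Algebra.lmul K A (t i))
      fun i => Algebra.lmul K A (s i))
    (G : IsGenericParameter q n) (H : HeckeRelations q n t) {B : Subalgebra K A}
    (hB : ∀ i, i + 1 < n → t i ∈ B) {i : ℕ} (hi : i + 1 < n) : s i ∈ B := by
  let tB : ℕ → B := fun j => if hj : j + 1 < n then ⟨t j, hB j hj⟩ else 0
  have htB : ∀ j, j + 1 < n → t j = B.val (tB j) := fun j hj => by simp [tB, hj]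
  have HB : HeckeRelations q n fun j => Algebra.lmul K B (tB j) :=
    heckeRelations_lmul_iff.2
      ((heckeRelations_comp_iff (F := B.val) Subtype.val_injective).1 (H.congr htB))
  obtain ⟨U, hU⟩ := exists_isSeminormalDeformation q' G HB
  have hincl : B.val.toLinearMap ∘ₗ U i = Algebra.lmul K A (s i) ∘ₗ B.val.toLinearMap :=
    hU.comp_eq_comp G HB P
      (fun j hj => LinearMap.ext fun x => congrArg (· * (x : A)) (htB j hj).symm) hi
  have hsi : (U i 1 : A) = s i * (1 : B) := LinearMap.congr_fun hincl 1
  rw [OneMemClass.coe_one, mul_one] at hsi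
  exact hsi ▸ (U i 1).2

theorem HeckeRelations.exists_deformation (q' : K) (H : HeckeRelations q n t)
    (ht : Algebra.adjoin K (t '' {i | i + 1 < n}) = ⊤) (G : IsGenericParameter q n)
    (G' : IsGenericParameter q' n) : ∃ s : ℕ → A,
      HeckeRelations q' n s ∧ Algebra.adjoin K (s '' {i | i + 1 < n}) = ⊤ := by
  obtain ⟨s, P⟩ := H.exists_isSeminormalDeformation_lmul q' G
  have hL := heckeRelations_lmul_iff.2 H
  have hs : HeckeRelations q' n s := heckeRelations_lmul_iff.1 (P.heckeRelations G G' hL)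
  refine ⟨s, hs, top_le_iff.1 (ht.ge.trans (Algebra.adjoin_le ?_))⟩
  rintro _ ⟨i, hi, rfl⟩
  exact (P.symm G G' hL).mem_subalgebra G' hs
    (fun j hj => Algebra.subset_adjoin (Set.mem_image_of_mem s hj)) hi

end GenericDeformation

/-! ### Normal words -/

section NormalWords

variable {K A : Type*} [Field K] [Ring A] [Algebra K A]

/-- The descending word `T_{k-1} T_{k-2} ⋯ T_{k-j}`, for `j ≤ k`. -/
def descendingWord (T : ℕ → A) (k : ℕ) : ℕ → A
  | 0 => 1
  | j + 1 => descendingWord T k j * T (k - 1 - j)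

open Classical Pointwise in
/-- The products `w_0 w_1 ⋯ w_{k-1}` of descending words `w_m = T_{m-1} T_{m-2} ⋯ T_{m-j}`, `j ≤ m`:
the normal forms for the elements of `S_k`. -/
noncomputable def normalWords (T : ℕ → A) : ℕ → Finset A
  | 0 => 1
  | k + 1 => normalWords T k * (Finset.range (k + 1)).image (descendingWord T k)

open Classical in
theorem card_normalWords_le (T : ℕ → A) (k : ℕ) : (normalWords T k).card ≤ k.factorial := by
  induction k with
  | zero => exact Finset.card_one.le
  | succ k ih =>
    have himage : ((Finset.range (k + 1)).image (descendingWord T k)).card ≤ k + 1 :=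
      Finset.card_image_le.trans (Finset.card_range _).le
    rw [Nat.factorial_succ, mul_comm]
    exact Finset.card_mul_le.trans (Nat.mul_le_mul ih himage)

theorem one_mem_normalWords (T : ℕ → A) (k : ℕ) : 1 ∈ normalWords T k := by
  classical
  induction k with
  | zero => exact Finset.one_mem_one
  | succ k ih =>
    have hone : 1 ∈ (Finset.range (k + 1)).image (descendingWord T k) :=
      Finset.mem_image_of_mem (descendingWord T k) (Finset.mem_range.2 k.succ_pos)
    exact mul_one (1 : A) ▸ Finset.mul_mem_mul ih hone

/-- The span of the normal words on `k` letters. -/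
noncomputable def normalSpan (K : Type*) {A : Type*} [Field K] [Ring A] [Algebra K A] (T : ℕ → A)
    (k : ℕ) : Submodule K A :=
  Submodule.span K (normalWords T k)

theorem normalSpan_succ (T : ℕ → A) (k : ℕ) : normalSpan K T (k + 1) =
    normalSpan K T k * Submodule.span K (descendingWord T k '' Set.Iic k) := by
  classical
  rw [normalSpan, normalWords, Finset.coe_mul, ← Submodule.span_mul_span, Finset.coe_image,
    Finset.coe_range]
  congr 3
  ext j
  exact Nat.lt_succ_iff

theorem one_mem_normalSpan (T : ℕ → A) (k : ℕ) : 1 ∈ normalSpan K T k :=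
  Submodule.subset_span (one_mem_normalWords T k)

namespace HeckeRelations

variable {q : K} {n : ℕ} {T : ℕ → A} (H : HeckeRelations q n T) {k : ℕ} (hk : k < n) {i j : ℕ}
include H hk

theorem commute_descendingWord (hij : i + j + 2 ≤ k) : Commute (T i) (descendingWord T k j) := by
  induction j with
  | zero => exact Commute.one_right _
  | succ j ih => exact (ih (by omega)).mul_right (H.comm _ _ (by omega) (by omega))

theorem descendingWord_mul_succ (hik : i + 1 < k) (hj : j ≤ k) (hij : k ≤ i + j) :
    descendingWord T k j * T (i + 1) = T i * descendingWord T k j := by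
  induction j with
  | zero => omega
  | succ j ih =>
    rcases hij.eq_or_lt with heq | hlt
    · obtain ⟨j, rfl⟩ : ∃ l, j = l + 1 := ⟨j - 1, by omega⟩
      have hcomm := (H.commute_descendingWord hk (i := i) (j := j) (by omega)).eq
      simp only [descendingWord, show k - 1 - j = i + 1 by omega, show k - 1 - (j + 1) = i by omega]
      calc descendingWord T k j * T (i + 1) * T i * T (i + 1)
          = descendingWord T k j * (T (i + 1) * T i * T (i + 1)) := by simp only [mul_assoc]
        _ = descendingWord T k j * T i * T (i + 1) * T i := by
          rw [← H.braid i (by omega)]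
          simp only [mul_assoc]
        _ = T i * (descendingWord T k j * T (i + 1) * T i) := by
          rw [← hcomm]
          simp only [mul_assoc]
    · have hcomm := (H.comm (k - 1 - j) (i + 1) (by omega) (by omega)).eq
      rw [descendingWord, mul_assoc, hcomm, ← mul_assoc, ih (by omega) (by omega), mul_assoc]

theorem descendingWord_mul (hj : j ≤ k) (hi : i < k) :
    (∃ l, l + 1 < k ∧ descendingWord T k j * T i = T l * descendingWord T k j) ∨
      descendingWord T k j * T i ∈ Submodule.span K (descendingWord T k '' Set.Iic k) := by
  have hmem : ∀ l ≤ k, descendingWord T k l ∈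
      Submodule.span K (descendingWord T k '' Set.Iic k) :=
    fun l hl => Submodule.subset_span (Set.mem_image_of_mem _ hl)
  rcases lt_trichotomy (i + j + 1) k with hlt | heq | hgt
  · exact .inl ⟨i, by omega, (H.commute_descendingWord hk hlt).eq.symm⟩
  · right
    have hsucc : descendingWord T k j * T i = descendingWord T k (j + 1) := by
      rw [descendingWord, show k - 1 - j = i by omega]
    exact hsucc ▸ hmem (j + 1) (by omega)
  · rcases (Nat.le_of_lt_succ hgt).eq_or_lt with heq | hlt
    · right
      obtain ⟨j, rfl⟩ : ∃ l, j = l + 1 := ⟨j - 1, by omega⟩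
      have hquad : descendingWord T k (j + 1) * T i =
          (q - q⁻¹) • descendingWord T k (j + 1) + descendingWord T k j := by
        rw [descendingWord, show k - 1 - j = i by omega, mul_assoc, H.quad i (by omega), mul_add,
          mul_smul_comm, mul_one]
      exact hquad ▸ add_mem (Submodule.smul_mem _ _ (hmem _ hj)) (hmem j (by omega))
    · obtain ⟨i, rfl⟩ : ∃ l, i = l + 1 := ⟨i - 1, by omega⟩
      exact .inl ⟨i, hi, H.descendingWord_mul_succ hk hi hj (by omega)⟩

omit hk in
theorem mul_mem_normalSpan (hk : k ≤ n) (hi : i + 1 < k) {w : A} (hw : w ∈ normalSpan K T k) :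
    w * T i ∈ normalSpan K T k := by
  induction k generalizing i w with
  | zero => omega
  | succ k ih =>
    rw [normalSpan_succ] at hw ⊢
    induction hw using Submodule.mul_induction_on' with
    | mem_mul_mem x hx y hy =>
      rw [mul_assoc]
      induction hy using Submodule.span_induction with
      | mem y hy =>
        obtain ⟨j, hj, rfl⟩ := hy
        rcases H.descendingWord_mul hk hj (Nat.lt_of_succ_lt_succ hi) with ⟨l, hl, heq⟩ | hmem
        · rw [heq, ← mul_assoc]
          exact Submodule.mul_mem_mul (ih (by omega) hl hx)
            (Submodule.subset_span (Set.mem_image_of_mem _ hj))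
        · exact Submodule.mul_mem_mul hx hmem
      | zero => simp only [zero_mul, mul_zero, zero_mem]
      | add y z _ _ hy hz => simpa only [add_mul, mul_add] using add_mem hy hz
      | smul a y _ hy => simpa only [smul_mul_assoc, mul_smul_comm] using Submodule.smul_mem _ a hy
    | add x _ y _ hx hy => simpa only [add_mul] using add_mem hx hy

omit hk in
theorem normalSpan_eq_top (hT : Algebra.adjoin K (T '' {i | i + 1 < n}) = ⊤) :
    normalSpan K T n = ⊤ := by
  have hmul : ∀ x ∈ Algebra.adjoin K (T '' {i | i + 1 < n}), ∀ w ∈ normalSpan K T n,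
      w * x ∈ normalSpan K T n := by
    intro x hx
    induction hx using Algebra.adjoin_induction with
    | mem x hx =>
      obtain ⟨i, hi, rfl⟩ := hx
      exact fun w hw => H.mul_mem_normalSpan le_rfl hi hw
    | algebraMap r =>
      intro w hw
      rw [← Algebra.commutes, ← Algebra.smul_def]
      exact Submodule.smul_mem _ _ hw
    | add x y _ _ hx hy => exact fun w hw => mul_add w x y ▸ add_mem (hx w hw) (hy w hw)
    | mul x y _ _ hx hy => exact fun w hw => mul_assoc w x y ▸ hy _ (hx w hw)
  exact Submodule.eq_top_iff'.2 fun x =>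
    one_mul x ▸ hmul x (hT ▸ Algebra.mem_top) 1 (one_mem_normalSpan T n)

omit hk in
theorem moduleFinite (hT : Algebra.adjoin K (T '' {i | i + 1 < n}) = ⊤) : Module.Finite K A :=
  ⟨⟨normalWords T n, H.normalSpan_eq_top hT⟩⟩

omit hk in
theorem finrank_le_factorial (hT : Algebra.adjoin K (T '' {i | i + 1 < n}) = ⊤) :
    Module.finrank K A ≤ n.factorial := by
  have hcard := finrank_span_finset_le_card (R := K) (normalWords T n)
  rw [Set.finrank, ← normalSpan, H.normalSpan_eq_top hT, finrank_top] at hcard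
  exact hcard.trans (card_normalWords_le T n)

end HeckeRelations

end NormalWords

/-! ### The group algebra of the symmetric group -/

section GroupAlgebra

/-- The transposition of the letters `i` and `i + 1`, counted from `0`; it is `1` if these are not
both letters. -/
def adjacentSwap (n i : ℕ) : Equiv.Perm (Fin n) :=
  if h : i + 1 < n then Equiv.swap ⟨i, by omega⟩ ⟨i + 1, h⟩ else 1

theorem adjacentSwap_mul_self (n i : ℕ) : adjacentSwap n i * adjacentSwap n i = 1 := by
  unfold adjacentSwap
  split_ifs
  · exact Equiv.swap_mul_self _ _
  · exact one_mul 1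

theorem swap_braid {α : Type*} [DecidableEq α] {a b c : α} (hab : a ≠ b) (hac : a ≠ c)
    (hbc : b ≠ c) : Equiv.swap a b * Equiv.swap b c * Equiv.swap a b =
      Equiv.swap b c * Equiv.swap a b * Equiv.swap b c := by
  rw [Equiv.swap_mul_swap_mul_swap hab hac, Equiv.swap_comm a b, Equiv.swap_comm b c,
    Equiv.swap_mul_swap_mul_swap hbc.symm hac.symm, Equiv.swap_comm]

theorem adjacentSwap_braid {n i : ℕ} (hi : i + 2 < n) :
    adjacentSwap n i * adjacentSwap n (i + 1) * adjacentSwap n i =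
      adjacentSwap n (i + 1) * adjacentSwap n i * adjacentSwap n (i + 1) := by
  have hi₁ : i + 1 < n := by omega
  simp only [adjacentSwap, hi, hi₁, dif_pos]
  exact swap_braid (by simp) (by simp [add_assoc]) (by simp)

theorem commute_adjacentSwap {n i j : ℕ} (hij : i + 2 ≤ j) :
    Commute (adjacentSwap n i) (adjacentSwap n j) := by
  unfold adjacentSwap
  split_ifs with hi hj
  · refine (Equiv.Perm.disjoint_iff_disjoint_support.2 ?_).commute
    rw [Equiv.Perm.support_swap (by simp), Equiv.Perm.support_swap (by simp)]
    simp [Fin.ext_iff]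
    omega
  · exact Commute.one_right _
  all_goals exact Commute.one_left _

theorem adjoin_of_image_eq_top {R M : Type*} [CommSemiring R] [Monoid M] {S : Set M}
    (hS : Submonoid.closure S = ⊤) : Algebra.adjoin R (MonoidAlgebra.of R M '' S) = ⊤ := by
  rw [Set.image_eq_range, Algebra.adjoin_range_eq_range_freeAlgebra_lift, AlgHom.range_eq_top]
  exact MonoidAlgebra.freeAlgebra_lift_of_surjective_of_closure hS

variable (K : Type*) [Field K] (n : ℕ)

theorem heckeRelations_adjacentSwap : HeckeRelations (1 : K) n
    fun i => MonoidAlgebra.of K (Equiv.Perm (Fin n)) (adjacentSwap n i) where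
  quad i _ := by
    rw [← map_mul, adjacentSwap_mul_self, map_one, inv_one, sub_self, zero_smul, zero_add]
  braid i hi := by simp only [← map_mul, adjacentSwap_braid hi]
  comm i j hij _ := (commute_adjacentSwap hij).map _

theorem closure_adjacentSwap : Submonoid.closure (adjacentSwap n '' {i | i + 1 < n}) = ⊤ := by
  cases n with
  | zero => exact Subsingleton.elim _ _
  | succ m =>
    rw [← top_le_iff, ← Equiv.Perm.mclosure_swap_castSucc_succ]
    refine Submonoid.closure_mono ?_
    rintro _ ⟨i, rfl⟩
    have hi : (i : ℕ) + 1 < m + 1 := by omega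
    exact ⟨i, hi, dif_pos hi⟩

theorem adjoin_adjacentSwap : Algebra.adjoin K
    ((fun i => MonoidAlgebra.of K (Equiv.Perm (Fin n)) (adjacentSwap n i)) '' {i | i + 1 < n}) =
      ⊤ := by
  rw [← Function.comp_def, Set.image_comp]
  exact adjoin_of_image_eq_top (closure_adjacentSwap n)

theorem finrank_groupAlgebra_perm :
    Module.finrank K (MonoidAlgebra K (Equiv.Perm (Fin n))) = n.factorial := by
  rw [Module.finrank_eq_card_basis (MonoidAlgebra.basis (Equiv.Perm (Fin n)) K),
    Fintype.card_perm, Fintype.card_fin]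

end GroupAlgebra

/-! ### The Iwahori–Hecke algebra -/

section IwahoriHecke

variable {q : ℂ} {n : ℕ}

/-- The generators of `H_n(q²)`, extended by zero to a sequence. -/
noncomputable def heckeGenerator (q : ℂ) (n i : ℕ) : HeckeAlgebra q n :=
  if h : i < n - 1 then HeckeAlgebra.T q n ⟨i, h⟩ else 0

theorem heckeGenerator_of_lt {i : ℕ} (h : i + 1 < n) :
    heckeGenerator q n i = HeckeAlgebra.T q n ⟨i, by omega⟩ :=
  dif_pos (by omega)

theorem heckeRelations_heckeGenerator (q : ℂ) (n : ℕ) :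
    HeckeRelations q n (heckeGenerator q n) := by
  refine ⟨fun i hi => ?_, fun i hi => ?_, fun i j hij hj => ?_⟩
  · rw [heckeGenerator_of_lt hi]
    simpa only [HeckeAlgebra.T, map_mul, map_add, map_smul, map_one] using
      RingQuot.mkAlgHom_rel ℂ (HeckeRel.quad (q := q) ⟨i, by omega⟩)
  · rw [heckeGenerator_of_lt (show i + 1 < n by omega), heckeGenerator_of_lt hi]
    simpa only [HeckeAlgebra.T, map_mul] using RingQuot.mkAlgHom_rel ℂ
      (HeckeRel.braid (q := q) ⟨i, by omega⟩ ⟨i + 1, by omega⟩ rfl)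
  · rw [heckeGenerator_of_lt (show i + 1 < n by omega), heckeGenerator_of_lt hj]
    simpa only [HeckeAlgebra.T, Commute, SemiconjBy, map_mul] using RingQuot.mkAlgHom_rel ℂ
      (HeckeRel.comm (q := q) ⟨i, by omega⟩ ⟨j, by omega⟩ hij)

theorem adjoin_heckeGenerator (q : ℂ) (n : ℕ) :
    Algebra.adjoin ℂ (heckeGenerator q n '' {i | i + 1 < n}) = ⊤ := by
  have hrange : Algebra.adjoin ℂ (Set.range (HeckeAlgebra.T q n)) = ⊤ := by
    have h := (RingQuot.mkAlgHom ℂ (HeckeRel q n)).map_adjoin (Set.range (FreeAlgebra.ι ℂ))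
    rw [FreeAlgebra.adjoin_range_ι, Algebra.map_top,
      (AlgHom.range_eq_top _).2 (RingQuot.mkAlgHom_surjective ℂ _), ← Set.range_comp] at h
    exact h.symm
  refine top_le_iff.1 (hrange.ge.trans (Algebra.adjoin_mono ?_))
  rintro _ ⟨i, rfl⟩
  have hi : (i : ℕ) + 1 < n := by omega
  exact ⟨i, hi, heckeGenerator_of_lt hi⟩

variable {A : Type*} [Ring A] [Algebra ℂ A] {S : ℕ → A}

/-- The universal property of `H_n(q²)`. -/
noncomputable def HeckeRelations.lift (H : HeckeRelations q n S) : HeckeAlgebra q n →ₐ[ℂ] A :=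
  RingQuot.liftAlgHom ℂ ⟨FreeAlgebra.lift ℂ fun i : Fin (n - 1) => S i, by
    rintro _ _ (⟨i, j, hij⟩ | ⟨i, j, hij⟩ | i) <;>
      simp only [heckeT, map_mul, map_add, map_smul, map_one, FreeAlgebra.lift_ι_apply]
    · rw [← hij]
      exact H.braid i (by omega)
    · exact H.comm i j hij (by omega)
    · exact H.quad i (by omega)⟩

theorem HeckeRelations.lift_heckeGenerator (H : HeckeRelations q n S) {i : ℕ} (hi : i + 1 < n) :
    H.lift (heckeGenerator q n i) = S i := by
  rw [heckeGenerator_of_lt hi, lift, HeckeAlgebra.T, RingQuot.liftAlgHom_mkAlgHom_apply, heckeT,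
    FreeAlgebra.lift_ι_apply]

theorem HeckeRelations.lift_surjective (H : HeckeRelations q n S)
    (hS : Algebra.adjoin ℂ (S '' {i | i + 1 < n}) = ⊤) : Function.Surjective H.lift := by
  rw [← AlgHom.range_eq_top, ← top_le_iff, ← hS, Algebra.adjoin_le_iff]
  rintro _ ⟨i, hi, rfl⟩
  exact ⟨heckeGenerator q n i, H.lift_heckeGenerator hi⟩

theorem HeckeRelations.lift_bijective [FiniteDimensional ℂ A] (H : HeckeRelations q n S)
    (hS : Algebra.adjoin ℂ (S '' {i | i + 1 < n}) = ⊤)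
    (hA : n.factorial ≤ Module.finrank ℂ A) : Function.Bijective H.lift := by
  have hgen := heckeRelations_heckeGenerator q n
  have : Module.Finite ℂ (HeckeAlgebra q n) := hgen.moduleFinite (adjoin_heckeGenerator q n)
  have hsurj : Function.Surjective H.lift.toLinearMap := H.lift_surjective hS
  have hle := LinearMap.finrank_le_finrank_of_surjective hsurj
  have hge := (hgen.finrank_le_factorial (adjoin_heckeGenerator q n)).trans hA
  exact ⟨(LinearMap.injective_iff_surjective_of_finrank_eq_finrank (hge.antisymm hle)).2 hsurj,
    hsurj⟩

end IwahoriHecke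

/-- If `q ≠ 0` and `q²` is not a primitive `k`-th root of unity for
any `2 ≤ k ≤ n`, then the Iwahori–Hecke algebra `H_n(q²)` is isomorphic as a
ℂ-algebra to the group algebra `ℂ[S_n]` of the symmetric group. -/
theorem stmt_12 (n : ℕ) (hn : 1 ≤ n) (q : ℂ) (hq : q ≠ 0)
    (hroot : ∀ k : ℕ, 2 ≤ k → k ≤ n → ¬ IsPrimitiveRoot (q ^ 2) k) :
    Nonempty (HeckeAlgebra q n ≃ₐ[ℂ] MonoidAlgebra ℂ (Equiv.Perm (Fin n))) := by
  obtain ⟨s, hs, hgen⟩ := (heckeRelations_adjacentSwap ℂ n).exists_deformation q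
    (adjoin_adjacentSwap ℂ n) (isGenericParameter_one n)
    (isGenericParameter_of_not_isPrimitiveRoot hq hroot)
  exact ⟨AlgEquiv.ofBijective hs.lift
    (hs.lift_bijective hgen (finrank_groupAlgebra_perm ℂ n).ge)⟩
end

section
/- Let r, q be nonzero complex numbers with q² ≠ 1 and n ≥ 2, and let ι : D_n(r,q) → D_{n+1}(r,q) be the canonical algebra homomorphism sending T_i to T_i (and S_i to S_i) for 1 ≤ i ≤ n−1. Then D_{n+1}(r,q) is spanned as a ℂ-vector space by the set of elements ι(A)·χ·ι(B), where A, B range over D_n(r,q) and χ ranges over {1, T_n, E_n}. -/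
/-- Generators of the BMW algebra `D_n(r,q)`: the invertible generators `T_i`
(left summand) and their inverses `S_i = T_i⁻¹` (right summand), `1 ≤ i ≤ n-1`. -/
abbrev BMWGenerators (n : ℕ) := Fin (n - 1) ⊕ Fin (n - 1)

/-- The generator `T_i` in the free algebra. -/
def bmwT (n : ℕ) (i : Fin (n - 1)) : FreeAlgebra ℂ (BMWGenerators n) :=
  FreeAlgebra.ι ℂ (Sum.inl i)

/-- The generator `S_i = T_i⁻¹` in the free algebra. -/
def bmwS (n : ℕ) (i : Fin (n - 1)) : FreeAlgebra ℂ (BMWGenerators n) :=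
  FreeAlgebra.ι ℂ (Sum.inr i)

/-- The element `E_i = 1 - (T_i - S_i)/(q - q⁻¹)` in the free algebra. -/
noncomputable def bmwE (q : ℂ) (n : ℕ) (i : Fin (n - 1)) : FreeAlgebra ℂ (BMWGenerators n) :=
  1 - (q - q⁻¹)⁻¹ • (bmwT n i - bmwS n i)

/-- The defining relations of the BMW algebra `D_n(r,q)`. -/
inductive BMWRel (r q : ℂ) (n : ℕ) :
    FreeAlgebra ℂ (BMWGenerators n) → FreeAlgebra ℂ (BMWGenerators n) → Prop
  | inv_right (i : Fin (n - 1)) : BMWRel r q n (bmwT n i * bmwS n i) 1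
  | inv_left (i : Fin (n - 1)) : BMWRel r q n (bmwS n i * bmwT n i) 1
  | braid (i j : Fin (n - 1)) (h : (i : ℕ) + 1 = (j : ℕ)) :
      BMWRel r q n (bmwT n i * bmwT n j * bmwT n i) (bmwT n j * bmwT n i * bmwT n j)
  | comm (i j : Fin (n - 1)) (h : (i : ℕ) + 2 ≤ (j : ℕ)) :
      BMWRel r q n (bmwT n i * bmwT n j) (bmwT n j * bmwT n i)
  | eT (i : Fin (n - 1)) : BMWRel r q n (bmwE q n i * bmwT n i) (r⁻¹ • bmwE q n i)
  | eTe (i j : Fin (n - 1)) (h : (i : ℕ) + 1 = (j : ℕ)) :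
      BMWRel r q n (bmwE q n j * bmwT n i * bmwE q n j) (r • bmwE q n j)
  | eSe (i j : Fin (n - 1)) (h : (i : ℕ) + 1 = (j : ℕ)) :
      BMWRel r q n (bmwE q n j * bmwS n i * bmwE q n j) (r⁻¹ • bmwE q n j)

/-- The BMW algebra `D_n(r,q)`. -/
abbrev BMW (r q : ℂ) (n : ℕ) := RingQuot (BMWRel r q n)

/-- The generator `T_i` of `D_n(r,q)`. -/
noncomputable def BMW.T (r q : ℂ) (n : ℕ) (i : Fin (n - 1)) : BMW r q n :=
  RingQuot.mkAlgHom ℂ (BMWRel r q n) (bmwT n i)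

/-- The generator `S_i = T_i⁻¹` of `D_n(r,q)`. -/
noncomputable def BMW.S (r q : ℂ) (n : ℕ) (i : Fin (n - 1)) : BMW r q n :=
  RingQuot.mkAlgHom ℂ (BMWRel r q n) (bmwS n i)

/-- The element `E_i` of `D_n(r,q)`. -/
noncomputable def BMW.E (r q : ℂ) (n : ℕ) (i : Fin (n - 1)) : BMW r q n :=
  RingQuot.mkAlgHom ℂ (BMWRel r q n) (bmwE q n i)

/-!
Write `A = ι(D_n)` and let `W(T)` be the span of `1`, `T` and the cup-cap element `E` of `T`.
If `W(T_n) A W(T_n) ⊆ A W(T_n) A`, then `A W(T_n) A` is closed under multiplication; as it contains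
`A`, `T_n` and `S_n`, it is all of `D_{n+1}`. By induction on `n`, `A = B W(T_{n-1}) B` with `B`
the image of `D_{n-1}`, which commutes with `T_n`. Hence
`W(T_n) A W(T_n) = B W(T_n) W(T_{n-1}) W(T_n) B`, and it remains to check the three-strand inclusion
`W(T_n) W(T_{n-1}) W(T_n) ⊆ A W(T_n) A` on products of the spanning elements.
-/

section BimoduleSpan

variable {K R : Type*} [CommSemiring K] [Semiring R] [Algebra K R]

/-- The `A`-bisubmodule `A W A` of `R` generated by a submodule `W`, where `A` is a subalgebra. -/
def bimoduleSpan (A : Subalgebra K R) (W : Submodule K R) : Submodule K R :=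
  A.toSubmodule * W * A.toSubmodule

variable {A B : Subalgebra K R} {V W : Submodule K R} {a x : R}

theorem bimoduleSpan_mono_left (h : A ≤ B) : bimoduleSpan A W ≤ bimoduleSpan B W := by
  have h' : A.toSubmodule ≤ B.toSubmodule := h
  unfold bimoduleSpan
  gcongr

theorem mul_bimoduleSpan_mul (A : Subalgebra K R) (W : Submodule K R) :
    A.toSubmodule * bimoduleSpan A W * A.toSubmodule = bimoduleSpan A W := by
  have hA := A.isIdempotentElem_toSubmodule.eq
  rw [bimoduleSpan, mul_assoc, mul_assoc _ A.toSubmodule, hA, ← mul_assoc, ← mul_assoc, hA]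

theorem mul_mul_mem_bimoduleSpan {b : R} (ha : a ∈ A) (hx : x ∈ bimoduleSpan A W) (hb : b ∈ A) :
    a * x * b ∈ bimoduleSpan A W := by
  rw [← mul_bimoduleSpan_mul]
  exact Submodule.mul_mem_mul (Submodule.mul_mem_mul ha hx) hb

theorem mul_mem_bimoduleSpan (ha : a ∈ A) (hx : x ∈ bimoduleSpan A W) :
    a * x ∈ bimoduleSpan A W := by
  simpa only [mul_one] using mul_mul_mem_bimoduleSpan ha hx (one_mem A)

theorem bimoduleSpan_mul_mem (hx : x ∈ bimoduleSpan A W) (ha : a ∈ A) :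
    x * a ∈ bimoduleSpan A W := by
  simpa only [one_mul] using mul_mul_mem_bimoduleSpan (one_mem A) hx ha

theorem le_bimoduleSpan : W ≤ bimoduleSpan A W := fun x hx => by
  have h1 : (1 : R) ∈ A.toSubmodule := one_mem A
  have h : 1 * x * 1 ∈ bimoduleSpan A W := Submodule.mul_mem_mul (Submodule.mul_mem_mul h1 hx) h1
  rwa [one_mul, mul_one] at h

theorem toSubmodule_le_bimoduleSpan (h1 : 1 ∈ W) : A.toSubmodule ≤ bimoduleSpan A W :=
  fun a ha => by simpa only [mul_one] using mul_mem_bimoduleSpan ha (le_bimoduleSpan h1)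

theorem bimoduleSpan_mul_self_le (hW : W * A.toSubmodule * W ≤ bimoduleSpan A W) :
    bimoduleSpan A W * bimoduleSpan A W ≤ bimoduleSpan A W := by
  calc bimoduleSpan A W * bimoduleSpan A W
      = A.toSubmodule * (W * (A.toSubmodule * A.toSubmodule) * W) * A.toSubmodule := by
        simp only [bimoduleSpan, mul_assoc]
    _ = A.toSubmodule * (W * A.toSubmodule * W) * A.toSubmodule := by
        rw [A.isIdempotentElem_toSubmodule.eq]
    _ ≤ A.toSubmodule * bimoduleSpan A W * A.toSubmodule := by gcongr
    _ = bimoduleSpan A W := mul_bimoduleSpan_mul A W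

theorem adjoin_le_bimoduleSpan (h1 : 1 ∈ W) (hW : W * A.toSubmodule * W ≤ bimoduleSpan A W)
    {s : Set R} (hs : s ⊆ bimoduleSpan A W) :
    (Algebra.adjoin K s).toSubmodule ≤ bimoduleSpan A W :=
  have hmul := Submodule.mul_le.mp (bimoduleSpan_mul_self_le hW)
  Algebra.adjoin_le (S := (bimoduleSpan A W).toSubalgebra (le_bimoduleSpan h1)
    fun x y hx hy => hmul x hx y hy) hs

theorem mul_bimoduleSpan_mul_le (hBA : B ≤ A) (hBW : ∀ b ∈ B, ∀ w ∈ W, Commute b w)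
    (hWVW : W * V * W ≤ bimoduleSpan A W) :
    W * bimoduleSpan B V * W ≤ bimoduleSpan A W := by
  have hBA' : B.toSubmodule ≤ A.toSubmodule := hBA
  have hcomm : B.toSubmodule * W = W * B.toSubmodule := Submodule.mul_comm_of_commute hBW
  calc W * bimoduleSpan B V * W
      = (W * B.toSubmodule) * V * (B.toSubmodule * W) := by simp only [bimoduleSpan, mul_assoc]
    _ = (B.toSubmodule * W) * V * (W * B.toSubmodule) := by rw [hcomm]
    _ = B.toSubmodule * (W * V * W) * B.toSubmodule := by simp only [mul_assoc]
    _ ≤ A.toSubmodule * bimoduleSpan A W * A.toSubmodule := by gcongr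
    _ = bimoduleSpan A W := mul_bimoduleSpan_mul A W

theorem bimoduleSpan_span (A : Subalgebra K R) (s : Set R) :
    bimoduleSpan A (Submodule.span K s) =
      Submodule.span K {x | ∃ a ∈ A, ∃ χ ∈ s, ∃ b ∈ A, x = a * χ * b} := by
  rw [bimoduleSpan, ← Submodule.span_eq A.toSubmodule, Submodule.span_mul_span,
    Submodule.span_mul_span]
  congr 1
  ext x
  constructor
  · rintro ⟨_, ⟨a, ha, χ, hχ, rfl⟩, b, hb, rfl⟩
    exact ⟨a, ha, χ, hχ, b, hb, rfl⟩
  · rintro ⟨a, ha, χ, hχ, b, hb, rfl⟩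
    exact ⟨a * χ, ⟨a, ha, χ, hχ, rfl⟩, b, hb, rfl⟩

end BimoduleSpan

section InitialSubalgebra

variable {K R : Type*} [CommSemiring K] [Semiring R] [Algebra K R] {N : ℕ} {T : Fin N → Rˣ}

/-- The subalgebra generated by the units `T i` with `i < k` and their inverses. -/
def initialSubalgebra (K : Type*) [CommSemiring K] [Algebra K R] (T : Fin N → Rˣ) (k : ℕ) :
    Subalgebra K R :=
  Algebra.adjoin K {x | ∃ i : Fin N, (i : ℕ) < k ∧ (x = T i ∨ x = ↑(T i)⁻¹)}

theorem coe_mem_initialSubalgebra {k : ℕ} {i : Fin N} (hi : (i : ℕ) < k) :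
    (T i : R) ∈ initialSubalgebra K T k :=
  Algebra.subset_adjoin ⟨i, hi, Or.inl rfl⟩

theorem inv_mem_initialSubalgebra {k : ℕ} {i : Fin N} (hi : (i : ℕ) < k) :
    (↑(T i)⁻¹ : R) ∈ initialSubalgebra K T k :=
  Algebra.subset_adjoin ⟨i, hi, Or.inr rfl⟩

theorem initialSubalgebra_le_iff {k : ℕ} {A : Subalgebra K R} :
    initialSubalgebra K T k ≤ A ↔
      ∀ i : Fin N, (i : ℕ) < k → (T i : R) ∈ A ∧ (↑(T i)⁻¹ : R) ∈ A := by
  refine ⟨fun h i hi => ⟨h (coe_mem_initialSubalgebra hi), h (inv_mem_initialSubalgebra hi)⟩,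
    fun h => Algebra.adjoin_le ?_⟩
  rintro _ ⟨i, hi, rfl | rfl⟩
  exacts [(h i hi).1, (h i hi).2]

theorem initialSubalgebra_mono : Monotone (initialSubalgebra K T) := fun _ _ hkl =>
  initialSubalgebra_le_iff.mpr fun _ hi =>
    ⟨coe_mem_initialSubalgebra (hi.trans_le hkl), inv_mem_initialSubalgebra (hi.trans_le hkl)⟩

theorem initialSubalgebra_zero : initialSubalgebra K T 0 = ⊥ :=
  le_bot_iff.mp (initialSubalgebra_le_iff.mpr fun _ hi => absurd hi (Nat.not_lt_zero _))

theorem initialSubalgebra_succ_le_bimoduleSpan {W : Submodule K R} (k : Fin N) (h1 : 1 ∈ W)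
    (hT : (T k : R) ∈ W) (hT' : (↑(T k)⁻¹ : R) ∈ W)
    (hW : W * (initialSubalgebra K T k).toSubmodule * W ≤
      bimoduleSpan (initialSubalgebra K T k) W) :
    (initialSubalgebra K T (k + 1)).toSubmodule ≤ bimoduleSpan (initialSubalgebra K T k) W := by
  refine adjoin_le_bimoduleSpan h1 hW ?_
  rintro x ⟨i, hi, hx⟩
  rcases Nat.lt_succ_iff_lt_or_eq.mp hi with hlt | heq
  · exact toSubmodule_le_bimoduleSpan h1 (Algebra.subset_adjoin ⟨i, hlt, hx⟩)
  · obtain rfl := Fin.ext heq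
    rcases hx with rfl | rfl
    exacts [le_bimoduleSpan hT, le_bimoduleSpan hT']

end InitialSubalgebra

section CupCap

variable {K R : Type*} [Field K] [Ring R] [Algebra K R]

/-- The cup-cap element `1 - (u - u⁻¹) / z` of a braid generator `u`; for `z = q - q⁻¹` and
`u = T_i` this is the element `E_i` of the BMW algebra. -/
def cupCap (z : K) (u : Rˣ) : R :=
  1 - z⁻¹ • ((u : R) - ↑u⁻¹)

/-- The relation `E T = r⁻¹ E`, which lets the cup-cap of `u` absorb a curl. -/
def CurlRelation (z r : K) (u : Rˣ) : Prop :=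
  cupCap z u * u = r⁻¹ • cupCap z u

/-- The span of `1`, `u` and the cup-cap of `u`; under the curl relation it is the image of the
BMW algebra on two strands. -/
def skeinSpan (z : K) (u : Rˣ) : Submodule K R :=
  Submodule.span K {1, (u : R), cupCap z u}

variable {z r : K} {u v : Rˣ} {x : R}

theorem coe_eq_inv_add_smul_one_sub (hz : z ≠ 0) (u : Rˣ) :
    (u : R) = ↑u⁻¹ + z • (1 - cupCap z u) := by
  rw [cupCap, sub_sub_cancel, smul_inv_smul₀ hz, add_sub_cancel]

theorem semiconjBy_cupCap (z : K) (h : SemiconjBy x (u : R) v) :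
    SemiconjBy x (cupCap z u) (cupCap z v) :=
  (SemiconjBy.one_right x).sub_right ((h.sub_right h.units_inv_right).smul_right z⁻¹)

theorem one_mem_skeinSpan (z : K) (u : Rˣ) : 1 ∈ skeinSpan z u :=
  Submodule.subset_span (by simp)

theorem coe_mem_skeinSpan (z : K) (u : Rˣ) : (u : R) ∈ skeinSpan z u :=
  Submodule.subset_span (by simp)

theorem cupCap_mem_skeinSpan (z : K) (u : Rˣ) : cupCap z u ∈ skeinSpan z u :=
  Submodule.subset_span (by simp)

theorem inv_mem_skeinSpan (hz : z ≠ 0) (u : Rˣ) : (↑u⁻¹ : R) ∈ skeinSpan z u := by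
  rw [← add_sub_cancel_right (↑u⁻¹ : R) (z • (1 - cupCap z u)), ← coe_eq_inv_add_smul_one_sub hz]
  exact sub_mem (coe_mem_skeinSpan z u) (Submodule.smul_mem _ _
    (sub_mem (one_mem_skeinSpan z u) (cupCap_mem_skeinSpan z u)))

theorem commute_of_mem_skeinSpan (hu : Commute x u) {w : R} (hw : w ∈ skeinSpan z u) :
    Commute x w := by
  have hle : skeinSpan z u ≤ (Subalgebra.centralizer K {x}).toSubmodule := by
    refine Submodule.span_le.mpr ?_
    rintro w (rfl | rfl | rfl) y rfl
    exacts [Commute.one_right y, hu, semiconjBy_cupCap z hu]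
  exact hle hw x rfl

theorem skeinSpan_le_toSubmodule {A : Subalgebra K R} (hu : (u : R) ∈ A)
    (hu' : (↑u⁻¹ : R) ∈ A) : skeinSpan z u ≤ A.toSubmodule := by
  refine Submodule.span_le.mpr ?_
  rintro w (rfl | rfl | rfl)
  exacts [one_mem A, hu, sub_mem (one_mem A) (A.smul_mem (sub_mem hu hu') _)]

namespace CurlRelation

theorem mul_cupCap (h : CurlRelation z r u) : (u : R) * cupCap z u = r⁻¹ • cupCap z u :=
  (semiconjBy_cupCap z (Commute.refl (u : R))).eq.trans h

theorem cupCap_mul_inv (h : CurlRelation z r u) (hr : r ≠ 0) :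
    cupCap z u * ↑u⁻¹ = r • cupCap z u := by
  rw [Units.mul_inv_eq_iff_eq_mul, smul_mul_assoc, h, smul_inv_smul₀ hr]

theorem inv_mul_cupCap (h : CurlRelation z r u) (hr : r ≠ 0) :
    ↑u⁻¹ * cupCap z u = r • cupCap z u := by
  rw [Units.inv_mul_eq_iff_eq_mul, mul_smul_comm, h.mul_cupCap, smul_inv_smul₀ hr]

theorem cupCap_mul_self (h : CurlRelation z r u) (hr : r ≠ 0) :
    cupCap z u * cupCap z u = (1 - z⁻¹ * (r⁻¹ - r)) • cupCap z u := by
  calc cupCap z u * cupCap z u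
      = cupCap z u * (1 - z⁻¹ • ((u : R) - ↑u⁻¹)) := rfl
    _ = cupCap z u - z⁻¹ • (cupCap z u * u - cupCap z u * ↑u⁻¹) := by
        rw [mul_sub, mul_one, mul_smul_comm, mul_sub]
    _ = (1 - z⁻¹ * (r⁻¹ - r)) • cupCap z u := by
        rw [h, h.cupCap_mul_inv hr]; module

theorem coe_mul_self (h : CurlRelation z r u) (hz : z ≠ 0) :
    (u * u : R) = 1 + z • (u : R) - (z * r⁻¹) • cupCap z u := by
  calc (u * u : R) = (↑u⁻¹ + z • (1 - cupCap z u)) * u := by rw [← coe_eq_inv_add_smul_one_sub hz]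
    _ = 1 + z • ((u : R) - cupCap z u * u) := by
        rw [add_mul, smul_mul_assoc, sub_mul, one_mul, Units.inv_mul]
    _ = 1 + z • (u : R) - (z * r⁻¹) • cupCap z u := by rw [h]; module

theorem skeinSpan_mul_self_le (h : CurlRelation z r u) (hz : z ≠ 0) (hr : r ≠ 0) :
    skeinSpan z u * skeinSpan z u ≤ skeinSpan z u := by
  have h1 := one_mem_skeinSpan z u
  have hu := coe_mem_skeinSpan z u
  have hE := cupCap_mem_skeinSpan z u
  conv_lhs => rw [skeinSpan, Submodule.span_mul_span]
  refine Submodule.span_le.mpr ?_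
  rintro _ ⟨x, rfl | rfl | rfl, y, rfl | rfl | rfl, rfl⟩ <;>
    simp only [one_mul, mul_one, SetLike.mem_coe]
  · exact h1
  · exact hu
  · exact hE
  · exact hu
  · rw [h.coe_mul_self hz]
    exact sub_mem (add_mem h1 (Submodule.smul_mem _ _ hu)) (Submodule.smul_mem _ _ hE)
  · rw [h.mul_cupCap]
    exact Submodule.smul_mem _ _ hE
  · exact hE
  · rw [h]
    exact Submodule.smul_mem _ _ hE
  · rw [h.cupCap_mul_self hr]
    exact Submodule.smul_mem _ _ hE

end CurlRelation

/-- The relations of the BMW algebra on three strands, with `u` and `v` in the roles of `T₁` and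
`T₂`, that involve `T₂`. -/
structure IsBMWPair (z r : K) (u v : Rˣ) : Prop where
  braid : (u * v * u : R) = v * u * v
  curl : CurlRelation z r v
  cupCap_mul_mul_cupCap : cupCap z v * u * cupCap z v = r • cupCap z v
  cupCap_mul_inv_mul_cupCap : cupCap z v * ↑u⁻¹ * cupCap z v = r⁻¹ • cupCap z v

namespace IsBMWPair

theorem semiconjBy_cupCap_left (h : IsBMWPair z r u v) :
    SemiconjBy (v * u : R) (cupCap z v) (cupCap z u) :=
  semiconjBy_cupCap z (h.braid.symm.trans (mul_assoc _ _ _))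

theorem semiconjBy_cupCap_right (h : IsBMWPair z r u v) :
    SemiconjBy (u * v : R) (cupCap z u) (cupCap z v) :=
  semiconjBy_cupCap z (h.braid.trans (mul_assoc _ _ _))

theorem cupCap_mul_cupCap_mul_cupCap (h : IsBMWPair z r u v) (hr : r ≠ 0) :
    cupCap z v * cupCap z u * cupCap z v = cupCap z v := by
  calc cupCap z v * cupCap z u * cupCap z v
      = cupCap z v * (1 - z⁻¹ • ((u : R) - ↑u⁻¹)) * cupCap z v := rfl
    _ = cupCap z v * cupCap z v
          - z⁻¹ • (cupCap z v * u * cupCap z v - cupCap z v * ↑u⁻¹ * cupCap z v) := by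
        simp only [mul_sub, sub_mul, mul_one, mul_smul_comm, smul_mul_assoc]
    _ = cupCap z v := by
        rw [h.curl.cupCap_mul_self hr, h.cupCap_mul_mul_cupCap, h.cupCap_mul_inv_mul_cupCap]
        module

theorem mul_mul_cupCap (h : IsBMWPair z r u v) (hr : r ≠ 0) :
    v * u * cupCap z v = cupCap z u * cupCap z v := by
  symm
  calc cupCap z u * cupCap z v
      = cupCap z u * (v * u) * ↑u⁻¹ * ↑v⁻¹ * cupCap z v := by
        simp only [← mul_assoc, Units.mul_inv_cancel_right]
    _ = v * u * (cupCap z v * ↑u⁻¹ * (↑v⁻¹ * cupCap z v)) := by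
        rw [← h.semiconjBy_cupCap_left.eq]; simp only [mul_assoc]
    _ = v * u * cupCap z v := by
        rw [h.curl.inv_mul_cupCap hr, mul_smul_comm, h.cupCap_mul_inv_mul_cupCap,
          smul_inv_smul₀ hr]

theorem cupCap_mul_mul (h : IsBMWPair z r u v) (hr : r ≠ 0) :
    cupCap z v * u * v = cupCap z v * cupCap z u := by
  symm
  calc cupCap z v * cupCap z u
      = cupCap z v * (↑v⁻¹ * (↑u⁻¹ * (u * v * cupCap z u))) := by
        simp only [mul_assoc, Units.inv_mul_cancel_left]
    _ = cupCap z v * ↑v⁻¹ * ↑u⁻¹ * cupCap z v * u * v := by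
        rw [h.semiconjBy_cupCap_right.eq]; simp only [mul_assoc]
    _ = cupCap z v * u * v := by
        rw [h.curl.cupCap_mul_inv hr, smul_mul_assoc, smul_mul_assoc, h.cupCap_mul_inv_mul_cupCap,
          smul_inv_smul₀ hr]

theorem mul_cupCap_mul_cupCap (h : IsBMWPair z r u v) (hz : z ≠ 0) (hr : r ≠ 0) :
    v * cupCap z u * cupCap z v =
      u * cupCap z v + z • (cupCap z u * cupCap z v) - z • cupCap z v := by
  have hinv : ↑v⁻¹ * (cupCap z u * cupCap z v) = u * cupCap z v := by
    rw [Units.inv_mul_eq_iff_eq_mul, ← h.mul_mul_cupCap hr, mul_assoc]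
  calc v * cupCap z u * cupCap z v
      = (↑v⁻¹ + z • (1 - cupCap z v)) * (cupCap z u * cupCap z v) := by
        rw [← coe_eq_inv_add_smul_one_sub hz, mul_assoc]
    _ = u * cupCap z v + z • (cupCap z u * cupCap z v
          - cupCap z v * cupCap z u * cupCap z v) := by
        rw [add_mul, hinv, smul_mul_assoc, sub_mul, one_mul, mul_assoc]
    _ = u * cupCap z v + z • (cupCap z u * cupCap z v) - z • cupCap z v := by
        rw [h.cupCap_mul_cupCap_mul_cupCap hr, smul_sub, add_sub_assoc]

theorem cupCap_mul_cupCap_mul (h : IsBMWPair z r u v) (hz : z ≠ 0) (hr : r ≠ 0) :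
    cupCap z v * cupCap z u * v =
      cupCap z v * u + z • (cupCap z v * cupCap z u) - z • cupCap z v := by
  have hinv : cupCap z v * cupCap z u * ↑v⁻¹ = cupCap z v * u := by
    rw [Units.mul_inv_eq_iff_eq_mul, h.cupCap_mul_mul hr]
  calc cupCap z v * cupCap z u * v
      = cupCap z v * cupCap z u * (↑v⁻¹ + z • (1 - cupCap z v)) := by
        rw [← coe_eq_inv_add_smul_one_sub hz]
    _ = cupCap z v * u + z • (cupCap z v * cupCap z u
          - cupCap z v * cupCap z u * cupCap z v) := by
        rw [mul_add, hinv, mul_smul_comm, mul_sub, mul_one]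
    _ = cupCap z v * u + z • (cupCap z v * cupCap z u) - z • cupCap z v := by
        rw [h.cupCap_mul_cupCap_mul_cupCap hr, smul_sub, add_sub_assoc]

theorem mul_cupCap_mul (h : IsBMWPair z r u v) (hz : z ≠ 0) :
    v * cupCap z u * v =
      ↑u⁻¹ * cupCap z v * u + z • (v * cupCap z u) - z • (v * cupCap z u * cupCap z v) := by
  have hinv : v * cupCap z u * ↑v⁻¹ = ↑u⁻¹ * cupCap z v * u := by
    rw [Units.mul_inv_eq_iff_eq_mul, mul_assoc, mul_assoc, Units.eq_inv_mul_iff_mul_eq,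
      ← mul_assoc, h.semiconjBy_cupCap_right.eq]
  calc v * cupCap z u * v
      = v * cupCap z u * (↑v⁻¹ + z • (1 - cupCap z v)) := by rw [← coe_eq_inv_add_smul_one_sub hz]
    _ = ↑u⁻¹ * cupCap z v * u + z • (v * cupCap z u - v * cupCap z u * cupCap z v) := by
        rw [mul_add, hinv, mul_smul_comm, mul_sub, mul_one]
    _ = _ := by rw [smul_sub, add_sub_assoc]

variable {A : Subalgebra K R}

theorem mul_coe_mul_mem_bimoduleSpan (h : IsBMWPair z r u v) (hr : r ≠ 0) (hu : (u : R) ∈ A)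
    (hu' : (↑u⁻¹ : R) ∈ A) {x y : R} (hx : x = v ∨ x = cupCap z v)
    (hy : y = v ∨ y = cupCap z v) : x * u * y ∈ bimoduleSpan A (skeinSpan z v) := by
  have hV : skeinSpan z v ≤ bimoduleSpan A (skeinSpan z v) := le_bimoduleSpan
  have hv := hV (coe_mem_skeinSpan z v)
  have hF := hV (cupCap_mem_skeinSpan z v)
  have hE : cupCap z u ∈ A := skeinSpan_le_toSubmodule hu hu' (cupCap_mem_skeinSpan z u)
  rcases hx with rfl | rfl <;> rcases hy with rfl | rfl
  · rw [← h.braid]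
    exact mul_mul_mem_bimoduleSpan hu hv hu
  · rw [h.mul_mul_cupCap hr]
    exact mul_mem_bimoduleSpan hE hF
  · rw [h.cupCap_mul_mul hr]
    exact bimoduleSpan_mul_mem hF hE
  · rw [h.cupCap_mul_mul_cupCap]
    exact Submodule.smul_mem _ _ hF

theorem mul_cupCap_mul_mem_bimoduleSpan (h : IsBMWPair z r u v) (hz : z ≠ 0) (hr : r ≠ 0)
    (hu : (u : R) ∈ A) (hu' : (↑u⁻¹ : R) ∈ A) {x y : R} (hx : x = v ∨ x = cupCap z v)
    (hy : y = v ∨ y = cupCap z v) : x * cupCap z u * y ∈ bimoduleSpan A (skeinSpan z v) := by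
  have hV : skeinSpan z v ≤ bimoduleSpan A (skeinSpan z v) := le_bimoduleSpan
  have hv := hV (coe_mem_skeinSpan z v)
  have hF := hV (cupCap_mem_skeinSpan z v)
  have hE : cupCap z u ∈ A := skeinSpan_le_toSubmodule hu hu' (cupCap_mem_skeinSpan z u)
  have hvEF : v * cupCap z u * cupCap z v ∈ bimoduleSpan A (skeinSpan z v) := by
    rw [h.mul_cupCap_mul_cupCap hz hr]
    exact sub_mem (add_mem (mul_mem_bimoduleSpan hu hF)
      (Submodule.smul_mem _ _ (mul_mem_bimoduleSpan hE hF))) (Submodule.smul_mem _ _ hF)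
  rcases hx with rfl | rfl <;> rcases hy with rfl | rfl
  · rw [h.mul_cupCap_mul hz]
    exact sub_mem (add_mem (mul_mul_mem_bimoduleSpan hu' hF hu)
      (Submodule.smul_mem _ _ (bimoduleSpan_mul_mem hv hE))) (Submodule.smul_mem _ _ hvEF)
  · exact hvEF
  · rw [h.cupCap_mul_cupCap_mul hz hr]
    exact sub_mem (add_mem (bimoduleSpan_mul_mem hF hu)
      (Submodule.smul_mem _ _ (bimoduleSpan_mul_mem hF hE))) (Submodule.smul_mem _ _ hF)
  · rwa [h.cupCap_mul_cupCap_mul_cupCap hr]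

theorem skeinSpan_mul_mul_le (h : IsBMWPair z r u v) (hz : z ≠ 0) (hr : r ≠ 0)
    (hu : (u : R) ∈ A) (hu' : (↑u⁻¹ : R) ∈ A) :
    skeinSpan z v * skeinSpan z u * skeinSpan z v ≤ bimoduleSpan A (skeinSpan z v) := by
  have hV : skeinSpan z v ≤ bimoduleSpan A (skeinSpan z v) := le_bimoduleSpan
  have hA : skeinSpan z u ≤ A.toSubmodule := skeinSpan_le_toSubmodule hu hu'
  conv_lhs => simp only [skeinSpan, Submodule.span_mul_span]
  refine Submodule.span_le.mpr ?_
  rintro _ ⟨_, ⟨x, hx, m, hm, rfl⟩, y, hy, rfl⟩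
  have hxV : x ∈ skeinSpan z v := Submodule.subset_span hx
  have hyV : y ∈ skeinSpan z v := Submodule.subset_span hy
  have hmA : m ∈ A := hA (Submodule.subset_span hm)
  simp only [SetLike.mem_coe]
  rcases hx with rfl | hx
  · simpa only [one_mul] using mul_mem_bimoduleSpan hmA (hV hyV)
  rcases hy with rfl | hy
  · simpa only [mul_one] using bimoduleSpan_mul_mem (hV hxV) hmA
  rcases hm with rfl | rfl | rfl
  · simpa only [mul_one] using
      hV (h.curl.skeinSpan_mul_self_le hz hr (Submodule.mul_mem_mul hxV hyV))
  · exact h.mul_coe_mul_mem_bimoduleSpan hr hu hu' hx hy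
  · exact h.mul_cupCap_mul_mem_bimoduleSpan hz hr hu hu' hx hy

end IsBMWPair

end CupCap

section BMWFamily

variable {K R : Type*} [Field K] [Ring R] [Algebra K R] {N : ℕ} {z r : K} {T : Fin N → Rˣ}

/-- The defining relations of the BMW algebra on `N + 1` strands, for units `T 0, …, T (N - 1)` of
an algebra over a field and `z` in place of `q - q⁻¹`. -/
structure IsBMWFamily (z r : K) (T : Fin N → Rˣ) : Prop where
  braid (i j : Fin N) (hij : (i : ℕ) + 1 = j) : (T i * T j * T i : R) = T j * T i * T j
  commute (i j : Fin N) (hij : (i : ℕ) + 2 ≤ j) : Commute (T i : R) (T j)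
  curl (i : Fin N) : CurlRelation z r (T i)
  cupCap_mul_mul_cupCap (i j : Fin N) (hij : (i : ℕ) + 1 = j) :
    cupCap z (T j) * T i * cupCap z (T j) = r • cupCap z (T j)
  cupCap_mul_inv_mul_cupCap (i j : Fin N) (hij : (i : ℕ) + 1 = j) :
    cupCap z (T j) * ↑(T i)⁻¹ * cupCap z (T j) = r⁻¹ • cupCap z (T j)

namespace IsBMWFamily

theorem isBMWPair (h : IsBMWFamily z r T) {i j : Fin N} (hij : (i : ℕ) + 1 = j) :
    IsBMWPair z r (T i) (T j) where
  braid := h.braid i j hij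
  curl := h.curl j
  cupCap_mul_mul_cupCap := h.cupCap_mul_mul_cupCap i j hij
  cupCap_mul_inv_mul_cupCap := h.cupCap_mul_inv_mul_cupCap i j hij

theorem commute_of_mem_initialSubalgebra (h : IsBMWFamily z r T) {k : ℕ} {j : Fin N}
    (hkj : k < j) {x : R} (hx : x ∈ initialSubalgebra K T k) : Commute x (T j) := by
  have hle : initialSubalgebra K T k ≤ Subalgebra.centralizer K {(T j : R)} := by
    refine initialSubalgebra_le_iff.mpr fun i hi => ?_
    have hij : Commute (T j : R) (T i) := (h.commute i j (by omega)).symm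
    constructor <;> rintro _ rfl
    exacts [hij, hij.units_inv_right]
  exact (hle hx (T j : R) rfl).symm

theorem initialSubalgebra_succ_le (h : IsBMWFamily z r T) (hz : z ≠ 0) (hr : r ≠ 0) (k : Fin N) :
    (initialSubalgebra K T (k + 1)).toSubmodule ≤
      bimoduleSpan (initialSubalgebra K T k) (skeinSpan z (T k)) := by
  obtain ⟨k, hk⟩ := k
  induction k with
  | zero =>
    refine initialSubalgebra_succ_le_bimoduleSpan _ (one_mem_skeinSpan z _)
      (coe_mem_skeinSpan z _) (inv_mem_skeinSpan hz _) ?_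
    rw [initialSubalgebra_zero, Algebra.toSubmodule_bot, mul_one]
    exact ((h.curl _).skeinSpan_mul_self_le hz hr).trans le_bimoduleSpan
  | succ j ih =>
    refine initialSubalgebra_succ_le_bimoduleSpan _ (one_mem_skeinSpan z _)
      (coe_mem_skeinSpan z _) (inv_mem_skeinSpan hz _) ?_
    set u := T ⟨j, by omega⟩
    set v := T ⟨j + 1, hk⟩
    have hpair : IsBMWPair z r u v := h.isBMWPair rfl
    have hcommute : ∀ b ∈ initialSubalgebra K T j, ∀ w ∈ skeinSpan z v, Commute b w :=
      fun b hb w hw => commute_of_mem_skeinSpan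
        (h.commute_of_mem_initialSubalgebra (Nat.lt_succ_self j) hb) hw
    calc skeinSpan z v * (initialSubalgebra K T (j + 1)).toSubmodule * skeinSpan z v
        ≤ skeinSpan z v * bimoduleSpan (initialSubalgebra K T j) (skeinSpan z u)
            * skeinSpan z v := by gcongr; exact ih _
      _ ≤ bimoduleSpan (initialSubalgebra K T (j + 1)) (skeinSpan z v) :=
        mul_bimoduleSpan_mul_le (initialSubalgebra_mono (Nat.le_succ j)) hcommute
          (hpair.skeinSpan_mul_mul_le hz hr (coe_mem_initialSubalgebra (Nat.lt_succ_self j))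
            (inv_mem_initialSubalgebra (Nat.lt_succ_self j)))

end IsBMWFamily

end BMWFamily

namespace BMW

variable (r q : ℂ) (n : ℕ)

/-- The generator `T_i` of `D_n(r,q)` as a unit, with inverse `S_i`. -/
noncomputable def unitT (i : Fin (n - 1)) : (BMW r q n)ˣ where
  val := T r q n i
  inv := S r q n i
  val_inv := by
    simpa only [T, S, map_mul, map_one] using RingQuot.mkAlgHom_rel ℂ (BMWRel.inv_right i)
  inv_val := by
    simpa only [T, S, map_mul, map_one] using RingQuot.mkAlgHom_rel ℂ (BMWRel.inv_left i)

theorem coe_unitT (i : Fin (n - 1)) : (unitT r q n i : BMW r q n) = T r q n i := rfl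

theorem coe_inv_unitT (i : Fin (n - 1)) : (↑(unitT r q n i)⁻¹ : BMW r q n) = S r q n i := rfl

theorem cupCap_unitT (i : Fin (n - 1)) : cupCap (q - q⁻¹) (unitT r q n i) = E r q n i := by
  simp only [cupCap, coe_unitT, coe_inv_unitT, T, S, E, bmwE, map_sub, map_one, map_smul]

theorem isBMWFamily_unitT : IsBMWFamily (q - q⁻¹) r (unitT r q n) where
  braid i j hij := by
    simpa only [coe_unitT, T, map_mul] using RingQuot.mkAlgHom_rel ℂ (BMWRel.braid i j hij)
  commute i j hij := by
    simpa only [commute_iff_eq, coe_unitT, T, map_mul] using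
      RingQuot.mkAlgHom_rel ℂ (BMWRel.comm i j hij)
  curl i := by
    simpa only [CurlRelation, cupCap_unitT, coe_unitT, T, E, map_mul, map_smul] using
      RingQuot.mkAlgHom_rel ℂ (BMWRel.eT i)
  cupCap_mul_mul_cupCap i j hij := by
    simpa only [cupCap_unitT, coe_unitT, T, E, map_mul, map_smul] using
      RingQuot.mkAlgHom_rel ℂ (BMWRel.eTe i j hij)
  cupCap_mul_inv_mul_cupCap i j hij := by
    simpa only [cupCap_unitT, coe_inv_unitT, S, E, map_mul, map_smul] using
      RingQuot.mkAlgHom_rel ℂ (BMWRel.eSe i j hij)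

theorem initialSubalgebra_unitT_eq_top : initialSubalgebra ℂ (unitT r q n) (n - 1) = ⊤ := by
  let π := RingQuot.mkAlgHom ℂ (BMWRel r q n)
  have hπ : π.range = ⊤ := (AlgHom.range_eq_top π).mpr (RingQuot.mkAlgHom_surjective ℂ _)
  rw [eq_top_iff, ← hπ, ← Algebra.map_top, ← FreeAlgebra.adjoin_range_ι, AlgHom.map_adjoin]
  refine Algebra.adjoin_le ?_
  rintro _ ⟨_, ⟨i | i, rfl⟩, rfl⟩
  exacts [coe_mem_initialSubalgebra i.2, inv_mem_initialSubalgebra (T := unitT r q n) i.2]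

end BMW

/-- For nonzero `r, q` with `q² ≠ 1` and `n ≥ 2`, letting
`ι : D_n(r,q) → D_{n+1}(r,q)` be the canonical algebra homomorphism (sending `T_i ↦ T_i`
and `S_i ↦ S_i`), the algebra `D_{n+1}(r,q)` is spanned as a ℂ-vector space by the
elements `ι(A)·χ·ι(B)` with `A, B ∈ D_n(r,q)` and `χ ∈ {1, T_n, E_n}`. -/
theorem stmt_15 (r q : ℂ) (hr : r ≠ 0) (hq : q ≠ 0) (hq2 : q ^ 2 ≠ 1)
    (n : ℕ) (hn : 2 ≤ n)
    (ι : BMW r q n →ₐ[ℂ] BMW r q (n + 1))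
    (hιT : ∀ i : Fin (n - 1),
      ι (BMW.T r q n i) = BMW.T r q (n + 1) (Fin.castLE (by omega) i))
    (hιS : ∀ i : Fin (n - 1),
      ι (BMW.S r q n i) = BMW.S r q (n + 1) (Fin.castLE (by omega) i)) :
    Submodule.span ℂ
      {x : BMW r q (n + 1) | ∃ (A B : BMW r q n) (χ : BMW r q (n + 1)),
        (χ = 1 ∨ χ = BMW.T r q (n + 1) ⟨n - 1, by omega⟩ ∨
          χ = BMW.E r q (n + 1) ⟨n - 1, by omega⟩) ∧
        x = ι A * χ * ι B} = ⊤ := by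
  have hz : q - q⁻¹ ≠ 0 := fun h =>
    hq2 (by rw [sq, ← mul_inv_cancel₀ hq, ← sub_eq_zero.mp h])
  set k : Fin (n + 1 - 1) := ⟨n - 1, by omega⟩
  set U := BMW.unitT r q (n + 1)
  have hι : initialSubalgebra ℂ U (n - 1) ≤ ι.range := initialSubalgebra_le_iff.mpr fun i hi =>
    ⟨⟨_, hιT ⟨i, hi⟩⟩, ⟨_, hιS ⟨i, hi⟩⟩⟩
  have htop : initialSubalgebra ℂ U (n - 1 + 1) = ⊤ := by
    rw [Nat.sub_add_cancel (by omega)]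
    exact BMW.initialSubalgebra_unitT_eq_top r q (n + 1)
  rw [eq_top_iff]
  calc (⊤ : Submodule ℂ (BMW r q (n + 1)))
      = (initialSubalgebra ℂ U (n - 1 + 1)).toSubmodule := by rw [htop, Algebra.top_toSubmodule]
    _ ≤ bimoduleSpan (initialSubalgebra ℂ U (n - 1)) (skeinSpan (q - q⁻¹) (U k)) :=
      (BMW.isBMWFamily_unitT r q (n + 1)).initialSubalgebra_succ_le hz hr k
    _ ≤ bimoduleSpan ι.range (skeinSpan (q - q⁻¹) (U k)) := bimoduleSpan_mono_left hι
    _ ≤ _ := by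
      rw [skeinSpan, bimoduleSpan_span, BMW.cupCap_unitT]
      refine Submodule.span_mono ?_
      rintro _ ⟨_, ⟨A, rfl⟩, χ, hχ, _, ⟨B, rfl⟩, rfl⟩
      exact ⟨A, B, χ, hχ, rfl⟩
end
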